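/- (BDG inequalities for simple quadratic variation.) Assume Assumption A. Let X be a martingale and τ = (τ_n) a proper sequence of stopping times. For any p ≥ 1 there exist finite positive constants c_p and C_p such that c_p · Ē(([X]^τ)^{p/2}) ≤ Ē(((X−X_0)^{τ,*})^p) ≤ C_p · Ē(([X]^τ)^{p/2}). For p > 1 one may take C_p = 6^p (p−1)^{p−1} and c_p = 1/C_p; for p = 1 one may take C_1 = 6 and c_1 = 1/3. -/

import Mathlib

open MeasureTheory Filter Set
open scoped ENNReal NNReal Topology

noncomputable section

namespace ModelFreeBDG

/-- A martingale space: a filtration `F` on `Ω` (with `F 0` trivial) together with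
finitely many basic continuous martingales `S j`, each adapted with all trajectories
continuous.  Time is indexed by `ℝ≥0`. -/
structure MartingaleSpace (Ω : Type*) where
  F : ℝ≥0 → MeasurableSpace Ω
  mono : Monotone F
  F0_trivial : F 0 = ⊥
  d : ℕ
  S : Fin d → ℝ≥0 → Ω → ℝ
  S_adapted : ∀ j t, Measurable[F t] fun ω => S j t ω
  S_cont : ∀ j ω, Continuous fun t => S j t ω

variable {Ω : Type*}

/-- A stopping time w.r.t. the filtration of `M`, with values in `[0,∞]`. -/
def MartingaleSpace.IsStoppingTime (M : MartingaleSpace Ω) (τ : Ω → ℝ≥0∞) : Prop :=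
  ∀ t : ℝ≥0, MeasurableSet[M.F t] {ω | τ ω ≤ (t : ℝ≥0∞)}

/-- `g` is measurable with respect to the σ-field `F_τ` generated by the stopping time `τ`. -/
def MartingaleSpace.MeasStopped (M : MartingaleSpace Ω) (τ : Ω → ℝ≥0∞) (g : Ω → ℝ) : Prop :=
  ∀ B : Set ℝ, MeasurableSet B → ∀ t : ℝ≥0,
    MeasurableSet[M.F t] {ω | g ω ∈ B ∧ τ ω ≤ (t : ℝ≥0∞)}

/-- A proper sequence of stopping times: nondecreasing, starting from `0`, and on each path
either divergent to `+∞` or eventually constant. -/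
structure ProperSeq (M : MartingaleSpace Ω) where
  τ : ℕ → Ω → ℝ≥0∞
  stopping : ∀ n, M.IsStoppingTime (τ n)
  mono : ∀ ω, Monotone fun n => τ n ω
  zero : ∀ ω, τ 0 ω = 0
  proper : ∀ ω, Tendsto (fun n => τ n ω) atTop (𝓝 ⊤) ∨ ∃ n, ∀ m, n ≤ m → τ m ω = τ n ω

/-- A simple trading strategy. -/
structure SimpleStrategy (M : MartingaleSpace Ω) where
  c : ℝ
  τ : ProperSeq M
  g : ℕ → Ω → ℝ
  g_bdd : ∀ n, ∃ C : ℝ, ∀ ω, |g n ω| ≤ C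
  g_meas : ∀ n, M.MeasStopped (τ.τ n) (g n)
  g_top : ∀ n ω, τ.τ n ω = ⊤ → g n ω = 0

/-- `τ(ω) ∧ t`, as an element of `ℝ≥0`. -/
def stopMin (τ : Ω → ℝ≥0∞) (t : ℝ≥0) (ω : Ω) : ℝ≥0 :=
  (min (τ ω) (t : ℝ≥0∞)).toNNReal

/-- The simple integral `(G·X)_t = c + Σ_{n≥1} g_{n-1}(X_{τ_n∧t} - X_{τ_{n-1}∧t})` for a
real process `X`. -/
def SimpleStrategy.integral {M : MartingaleSpace Ω} (G : SimpleStrategy M)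
    (X : ℝ≥0 → Ω → ℝ) (t : ℝ≥0) (ω : Ω) : ℝ :=
  G.c + ∑' n : ℕ,
    G.g n ω * (X (stopMin (G.τ.τ (n + 1)) t ω) ω - X (stopMin (G.τ.τ n) t ω) ω)

/-- A simple capital process: a finite sum `Σ_{j} (G^j · S^j)` over simple trading strategies. -/
def IsSimpleCapital (M : MartingaleSpace Ω) (X : ℝ≥0 → Ω → ℝ) : Prop :=
  ∃ G : Fin M.d → SimpleStrategy M, ∀ t ω, X t ω = ∑ j, (G j).integral (M.S j) t ω

/-- The class `𝓒` of nonnegative supermartingales: the smallest class of `[-∞,∞]`-valued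
processes containing all nonnegative simple capital processes, closed under adding a simple
capital process whenever the sum stays nonnegative, and closed under pointwise `liminf`. -/
inductive IsNonnegSupermart (M : MartingaleSpace Ω) : (ℝ≥0 → Ω → EReal) → Prop
  | simple (X : ℝ≥0 → Ω → ℝ) (hX : IsSimpleCapital M X) (hpos : ∀ t ω, 0 ≤ X t ω) :
      IsNonnegSupermart M fun t ω => (X t ω : EReal)
  | add (X : ℝ≥0 → Ω → EReal) (Y : ℝ≥0 → Ω → ℝ) (hX : IsNonnegSupermart M X)
      (hY : IsSimpleCapital M Y) (hpos : ∀ t ω, 0 ≤ X t ω + (Y t ω : EReal)) :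
      IsNonnegSupermart M fun t ω => X t ω + (Y t ω : EReal)
  | liminf (Xs : ℕ → ℝ≥0 → Ω → EReal) (hXs : ∀ n, IsNonnegSupermart M (Xs n)) :
      IsNonnegSupermart M fun t ω => Filter.liminf (fun n => Xs n t ω) atTop

/-- The upper expectation `Ē Y` of a generalized process `Y`: the infimum of the (deterministic)
initial values of nonnegative supermartingales dominating `Y`. -/
def upperExp (M : MartingaleSpace Ω) (Y : ℝ≥0 → Ω → EReal) : EReal :=
  sInf {x : EReal | ∃ X, IsNonnegSupermart M X ∧ (∀ ω, X 0 ω = x) ∧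
    ∀ t ω, Y t ω ≤ X t ω}

/-- The outer measure `P̄ A := Ē 1_A` of a set of pairs `(t, ω)`. -/
def upperProb (M : MartingaleSpace Ω) (A : Set (ℝ≥0 × Ω)) : EReal :=
  upperExp M fun t ω => A.indicator (fun _ => (1 : EReal)) (t, ω)

/-- A set `E ⊆ [0,∞) × Ω` is instantly enforceable if some nonnegative supermartingale with
initial value `1` becomes `+∞` outside of `E`. -/
def InstantlyEnforceable (M : MartingaleSpace Ω) (E : Set (ℝ≥0 × Ω)) : Prop :=
  ∃ X, IsNonnegSupermart M X ∧ (∀ ω, X 0 ω = 1) ∧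
    ∀ t ω, (t, ω) ∉ E → X t ω = ⊤

/-- A set is instantly blockable iff its complement is instantly enforceable. -/
def InstantlyBlockable (M : MartingaleSpace Ω) (B : Set (ℝ≥0 × Ω)) : Prop :=
  InstantlyEnforceable M Bᶜ

/-- Assumption A: for any `t ≥ 0` and any instantly blockable set `B`, the projection of
`B ∩ ([0,t] × Ω)` onto `Ω` belongs to `F t`. -/
def AssumptionA (M : MartingaleSpace Ω) : Prop :=
  ∀ (t : ℝ≥0) (B : Set (ℝ≥0 × Ω)), InstantlyBlockable M B →
    MeasurableSet[M.F t] {ω | ∃ s : ℝ≥0, s ≤ t ∧ (s, ω) ∈ B}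

/-- The values of `X` are real w.i.e. -/
def RealWIE (M : MartingaleSpace Ω) (X : ℝ≥0 → Ω → EReal) : Prop :=
  InstantlyEnforceable M {p : ℝ≥0 × Ω | ∃ r : ℝ, X p.1 p.2 = (r : EReal)}

/-- The set of `(t,ω)` where `sup_{s ∈ [0,t]} |X_s(ω) - X^n_s(ω)| → 0` as `n → ∞`. -/
def unifConvSet (Xn : ℕ → ℝ≥0 → Ω → EReal) (X : ℝ≥0 → Ω → EReal) : Set (ℝ≥0 × Ω) :=
  {p | Tendsto (fun n => ⨆ s ∈ Icc (0 : ℝ≥0) p.1, (X s p.2 - Xn n s p.2).abs)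
    atTop (𝓝 (0 : ℝ≥0∞))}

/-- The class `𝓜` of martingales: the smallest class of adapted, real w.i.e. processes
containing all simple capital processes and closed under locally uniform limits w.i.e. -/
inductive IsMartingale (M : MartingaleSpace Ω) : (ℝ≥0 → Ω → EReal) → Prop
  | simple (X : ℝ≥0 → Ω → ℝ) (hX : IsSimpleCapital M X) :
      IsMartingale M fun t ω => (X t ω : EReal)
  | lim (Xn : ℕ → ℝ≥0 → Ω → EReal) (X : ℝ≥0 → Ω → EReal)
      (hXn : ∀ n, IsMartingale M (Xn n))
      (hadapted : ∀ t, Measurable[M.F t] (X t))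
      (hreal : RealWIE M X)
      (hconv : InstantlyEnforceable M (unifConvSet Xn X)) :
      IsMartingale M X

/-- `X_{τ ∧ t}(ω)`. -/
def stopVal (X : ℝ≥0 → Ω → EReal) (τ : Ω → ℝ≥0∞) (t : ℝ≥0) (ω : Ω) : EReal :=
  X (stopMin τ t ω) ω

/-- The simple quadratic variation `[X]^τ_t := Σ_{n≥1} (X_{τ_n∧t} - X_{τ_{n-1}∧t})²`,
as an element of `[0,∞]`. -/
def sqVarAlong (X : ℝ≥0 → Ω → EReal) (τ : ℕ → Ω → ℝ≥0∞) (t : ℝ≥0) (ω : Ω) : ℝ≥0∞ :=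
  ∑' n : ℕ, ((stopVal X (τ (n + 1)) t ω - stopVal X (τ n) t ω) ^ 2).abs

/-- `Y^{τ,*}_t := sup_n |Y_{τ_n ∧ t}|`, as an element of `[0,∞]`. -/
def supAlong (Y : ℝ≥0 → Ω → EReal) (τ : ℕ → Ω → ℝ≥0∞) (t : ℝ≥0) (ω : Ω) : ℝ≥0∞ :=
  ⨆ n : ℕ, (stopVal Y (τ n) t ω).abs

/-- The supremum process `Y^*_t := sup_{0 ≤ s ≤ t} |Y_s|`, as an element of `[0,∞]`. -/
def supProc (Y : ℝ≥0 → Ω → EReal) (t : ℝ≥0) (ω : Ω) : ℝ≥0∞ :=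
  ⨆ s ∈ Icc (0 : ℝ≥0) t, (Y s ω).abs

/-- The hitting time `σ(X,c) := inf {t ≥ 0 : |X_t| ≥ c}`. -/
def hitting (X : ℝ≥0 → Ω → EReal) (c : ℝ) (ω : Ω) : ℝ≥0∞ :=
  ⨅ t ∈ {t : ℝ≥0 | ENNReal.ofReal c ≤ (X t ω).abs}, (t : ℝ≥0∞)

/-- The oscillation of the trajectory of `X` on `[a,b]`. -/
def oscOn (X : ℝ≥0 → Ω → EReal) (a b : ℝ≥0) (ω : Ω) : EReal :=
  (⨆ s ∈ Icc a b, X s ω) - ⨅ s ∈ Icc a b, X s ω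

/-- The set of `(t,ω)` on which the sequence `σ` finely covers `X` with accuracy `δ`:
only finitely many `σ_n(ω) ≤ t`, and the oscillation of `X(ω)` on each interval
`[σ_n(ω)∧t, σ_{n+1}(ω)∧t]` is at most `δ`. -/
def fineCoverSet (σ : ℕ → Ω → ℝ≥0∞) (X : ℝ≥0 → Ω → EReal) (δ : ℝ) : Set (ℝ≥0 × Ω) :=
  {p | {n : ℕ | σ n p.2 ≤ (p.1 : ℝ≥0∞)}.Finite ∧
    ∀ n, oscOn X (stopMin (σ n) p.1 p.2) (stopMin (σ (n + 1)) p.1 p.2) p.2 ≤ (δ : EReal)}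

/-- `σ` is a fine cover of `X` with accuracy `δ` on the set `E`. -/
def FinelyCoversOn (M : MartingaleSpace Ω) (σ : ℕ → Ω → ℝ≥0∞) (X : ℝ≥0 → Ω → EReal)
    (δ : ℝ) (E : Set (ℝ≥0 × Ω)) : Prop :=
  (∀ n, M.IsStoppingTime (σ n)) ∧ (∀ ω, Monotone fun n => σ n ω) ∧ (∀ ω, σ 0 ω = 0) ∧
    E ⊆ fineCoverSet σ X δ

/-- `σ` is a fine cover of `X` with accuracy `δ` w.i.e. -/
def ProperSeq.FinelyCoversWIE {M : MartingaleSpace Ω} (σ : ProperSeq M)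
    (X : ℝ≥0 → Ω → EReal) (δ : ℝ) : Prop :=
  InstantlyEnforceable M (fineCoverSet σ.τ X δ)

/-- The set of `(t,ω)` on which `sup_{s ∈ [0, σ(ω) ∧ t]} |Y^m_s(ω) - Y_s(ω)| → 0`, i.e.
locally uniform convergence on the random interval `[0,σ]∖{+∞}`. -/
def convWithinSet (Ym : ℕ → ℝ≥0 → Ω → EReal) (Y : ℝ≥0 → Ω → EReal) (σ : Ω → ℝ≥0∞) :
    Set (ℝ≥0 × Ω) :=
  {p | Tendsto (fun m => ⨆ s ∈ Icc (0 : ℝ≥0) (stopMin σ p.1 p.2),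
    (Ym m s p.2 - Y s p.2).abs) atTop (𝓝 (0 : ℝ≥0∞))}

/-- The set of `(t,ω)` on which `sup_{s ∈ [0,t]} |Y^m_s(ω) - Y_s(ω)| → 0`, i.e. locally
uniform convergence. -/
def locUnifConvSet (Ym : ℕ → ℝ≥0 → Ω → EReal) (Y : ℝ≥0 → Ω → EReal) : Set (ℝ≥0 × Ω) :=
  {p | Tendsto (fun m => ⨆ s ∈ Icc (0 : ℝ≥0) p.1, (Ym m s p.2 - Y s p.2).abs)
    atTop (𝓝 (0 : ℝ≥0∞))}

/-- `Q` is a quadratic variation of `X`: a real continuous adapted process such that, for every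
summable sequence of positive accuracies `δ_m` and every sequence of proper sequences of
stopping times `σ^m` finely covering `X` with accuracy `δ_m` w.i.e., and every `c > 0`, the
simple quadratic variations `[X]^{σ^m}` converge locally uniformly on `[0, σ(X,c)]∖{+∞}`
w.i.e. to `Q`. -/
structure IsQuadVar (M : MartingaleSpace Ω) (X : ℝ≥0 → Ω → EReal) (Q : ℝ≥0 → Ω → ℝ) :
    Prop where
  adapted : ∀ t, Measurable[M.F t] (Q t)
  cont : ∀ ω, Continuous fun t => Q t ω
  conv : ∀ δ : ℕ → ℝ, (∀ m, 0 < δ m) → Summable δ →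
    ∀ σ : ℕ → ProperSeq M, (∀ m, (σ m).FinelyCoversWIE X (δ m)) →
    ∀ c : ℝ, 0 < c →
      InstantlyEnforceable M (convWithinSet
        (fun m t ω => ((sqVarAlong X (σ m).τ t ω : ℝ≥0∞) : EReal))
        (fun t ω => ((Q t ω : ℝ) : EReal)) (hitting X c))

open Classical in
/-- The Lebesgue–Stieltjes measure on `ℝ` associated with a monotone continuous function
(and the zero measure otherwise). -/
def lsMeasure (a : ℝ → ℝ) : Measure ℝ :=
  if h : Monotone a ∧ Continuous a then
    StieltjesFunction.measure ⟨a, h.1, fun _ => h.2.continuousWithinAt⟩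
  else 0

/-- The pathwise Lebesgue–Stieltjes integral `∫_0^t g dа` for functions on `ℝ≥0`. -/
def lsInt (g : ℝ≥0 → ℝ) (a : ℝ≥0 → ℝ) (t : ℝ≥0) : ℝ :=
  ∫ s in Ioc (0 : ℝ) (t : ℝ), g s.toNNReal ∂(lsMeasure fun s => a s.toNNReal)

/-- The pathwise Lebesgue–Stieltjes integral `∫_0^t g d(¼ Qp − ¼ Qm)`, i.e. the integral
with respect to a quadratic covariation `[X,Y] = ¼[X+Y] − ¼[X−Y]`. -/
def covIntegral (g : ℝ≥0 → ℝ) (Qp Qm : ℝ≥0 → ℝ) (t : ℝ≥0) : ℝ :=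
  (1 / 4 : ℝ) * lsInt g Qp t - (1 / 4 : ℝ) * lsInt g Qm t

/-- The step process associated with a simple trading strategy:
`G_t = Σ_{n≥1} g_{n-1} 1_{[τ_{n-1}, τ_n)}(t)`. -/
def SimpleStrategy.step {M : MartingaleSpace Ω} (G : SimpleStrategy M) (t : ℝ≥0) (ω : Ω) :
    ℝ :=
  ∑' n : ℕ, ({t' : ℝ≥0 | G.τ.τ n ω ≤ (t' : ℝ≥0∞) ∧ (t' : ℝ≥0∞) < G.τ.τ (n + 1) ω}).indicator
    (fun _ => G.g n ω) t

/-- The simple integral `(G·X)` of a simple trading strategy against an `EReal`-valued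
process. -/
def SimpleStrategy.integralE {M : MartingaleSpace Ω} (G : SimpleStrategy M)
    (X : ℝ≥0 → Ω → EReal) (t : ℝ≥0) (ω : Ω) : EReal :=
  (G.c : EReal) + ∑' n : ℕ,
    (G.g n ω : EReal) * (stopVal X (G.τ.τ (n + 1)) t ω - stopVal X (G.τ.τ n) t ω)

/-- Membership in the space `𝓡` of generalized processes whose trajectories are Borel
measurable and real on every interval `[0,t]` w.i.e. -/
def MemR (M : MartingaleSpace Ω) (G : ℝ≥0 → Ω → EReal) : Prop :=
  InstantlyEnforceable M {p : ℝ≥0 × Ω |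
    (∀ s ∈ Icc (0 : ℝ≥0) p.1, ∃ r : ℝ, G s p.2 = (r : EReal)) ∧
    Measurable ((Icc (0 : ℝ≥0) p.1).restrict fun s => G s p.2)}

/-- The pseudo-distance `d_{∞,X,loc}(Y,Z) := Σ_{N≥1} 2^{-N} Ē((Y−Z)^*_{·∧σ(X,N)})`. -/
def dInfLoc (M : MartingaleSpace Ω) (X : ℝ≥0 → Ω → EReal) (Y Z : ℝ≥0 → Ω → EReal) :
    EReal :=
  ∑' N : ℕ, (((1 / 2 : ℝ) ^ (N + 1) : ℝ) : EReal) *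
    upperExp M (fun t ω =>
      ((⨆ s ∈ Icc (0 : ℝ≥0) (stopMin (hitting X ((N : ℝ) + 1)) t ω),
        (Y s ω - Z s ω).abs : ℝ≥0∞) : EReal))

/-- The approximating stopping times `τ^m_n` for a càdlàg integrand `G`:
`τ^m_0 = 0`, `τ^m_{n+1} = inf{t > τ^m_n : |G_t − G_{τ^m_n}| ≥ 2^{-m}}`. -/
def approxTimes (G : ℝ≥0 → Ω → ℝ) (m : ℕ) : ℕ → Ω → ℝ≥0∞
  | 0 => fun _ => 0
  | n + 1 => fun ω =>
      ⨅ t ∈ {t : ℝ≥0 | approxTimes G m n ω < (t : ℝ≥0∞) ∧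
        ((2 : ℝ) ^ m)⁻¹ ≤ |G t ω - G ((approxTimes G m n ω).toNNReal) ω|}, (t : ℝ≥0∞)

/-- The approximating simple integral `(G^m · X)` where
`G^m_t = Σ_{n≥1} G_{τ^m_{n-1}} 1_{[τ^m_{n-1}, τ^m_n)}(t)`. -/
def approxInt (G : ℝ≥0 → Ω → ℝ) (X : ℝ≥0 → Ω → EReal) (m : ℕ) (t : ℝ≥0) (ω : Ω) :
    EReal :=
  ∑' n : ℕ, ((G ((approxTimes G m n ω).toNNReal) ω : ℝ) : EReal) *
    (stopVal X (approxTimes G m (n + 1)) t ω - stopVal X (approxTimes G m n) t ω)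

/-- `I` is a model-free integral `G·X`: a representative of the `d_{∞,X,loc}`-limit of the
classes of the approximating simple integrals `G^m·X`. -/
def IsModelFreeIntegral (M : MartingaleSpace Ω) (X : ℝ≥0 → Ω → EReal) (G : ℝ≥0 → Ω → ℝ)
    (I : ℝ≥0 → Ω → EReal) : Prop :=
  Tendsto (fun m => dInfLoc M X (approxInt G X m) I) atTop (𝓝 (0 : EReal))

/-- The filtration of `M` is right-continuous. -/
def RightContinuousFiltration (M : MartingaleSpace Ω) : Prop :=
  ∀ t : ℝ≥0, M.F t = ⨅ (s : ℝ≥0) (_ : t < s), M.F s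

/-- A càdlàg function on `ℝ≥0`. -/
def IsCadlag (f : ℝ≥0 → ℝ) : Prop :=
  (∀ t, ContinuousWithinAt f (Ici t) t) ∧
    ∀ t : ℝ≥0, 0 < t → ∃ l : ℝ, Tendsto f (𝓝[<] t) (𝓝 l)

/-- The truncated variation `TV^c(x,[0,t])` of a function `x : ℝ≥0 → ℝ`. -/
def truncVar (x : ℝ≥0 → ℝ) (c : ℝ) (t : ℝ≥0) : ℝ≥0∞ :=
  ⨆ (n : ℕ) (u : Fin (n + 1) → ℝ≥0) (_ : Monotone u) (_ : ∀ i, u i ≤ t),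
    ∑ i : Fin n, ENNReal.ofReal (|x (u i.succ) - x (u i.castSucc)| - c)


section helpers
/-- potential for the upper Davis inequality -/
def wb (x s m : ℝ) : ℝ := max 0 (|x| + s - max m s)
def Vb (x s m : ℝ) : ℝ := max m s + (wb x s m) ^ 2 / (2 * s) - 3 * s
def hb (x s m : ℝ) : ℝ := (if 0 ≤ x then 1 else -1) * (wb x s m / s)

lemma core_b_opp {a b s t m w w' R R' : ℝ} (ha : 0 ≤ a) (hb : 0 ≤ b) (hs : 0 < s) (hst : s ≤ t)
    (ht : t ^ 2 = s ^ 2 + (a + b) ^ 2) (hw0 : 0 ≤ w) (hws : w ≤ s) (hwa : w ≤ a)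
    (hw0' : 0 ≤ w') (hwb' : w' ≤ b) (hwt' : w' ≤ t) (hR : R' - R ≤ t - s) :
    R' + w' ^ 2 / (2 * t) - 3 * t ≤ R + w ^ 2 / (2 * s) - 3 * s - (w / s) * (a + b) := by
  have ht0 : 0 < t := by linarith
  have hbt : a + b ≤ t := by nlinarith
  have key : w' ^ 2 / (2 * t) + ((w / s) * (a + b) - w ^ 2 / (2 * s)) ≤ 2 * (t - s) := by
    by_cases h3 : t ≤ 3 * s
    · have e1 : w' ^ 2 / (2 * t) ≤ b ^ 2 / (2 * s) := by
        gcongr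
      have e2 : (w / s) * (a + b) - w ^ 2 / (2 * s) = (2 * w * (a + b) - w ^ 2) / (2 * s) := by
        field_simp
      have e3 : (2 * w * (a + b) - w ^ 2) / (2 * s) ≤ (a ^ 2 + 2 * a * b) / (2 * s) := by
        gcongr; nlinarith
      have e4 : b ^ 2 / (2 * s) + (a ^ 2 + 2 * a * b) / (2 * s) = (t ^ 2 - s ^ 2) / (2 * s) := by
        rw [ht]; ring
      have e5 : (t ^ 2 - s ^ 2) / (2 * s) ≤ 2 * (t - s) := by
        rw [div_le_iff₀ (by positivity)]; nlinarith
      linarith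
    · push Not at h3
      have hsd : s ≤ a + b := by nlinarith
      have e1 : w' ^ 2 / (2 * t) ≤ t / 2 := by
        rw [div_le_iff₀ (by positivity)]; nlinarith
      have e2 : (w / s) * (a + b) - w ^ 2 / (2 * s) ≤ (a + b) - s / 2 := by
        have : (w / s) * (a + b) - w ^ 2 / (2 * s) = (2 * w * (a + b) - w ^ 2) / (2 * s) := by
          field_simp
        rw [this, div_le_iff₀ (by positivity)]; nlinarith
      linarith
  linarith

lemma core_b_same {a D s t R R' : ℝ} (ha : 0 ≤ a) (hb : 0 ≤ a + D) (hs : 0 < s) (hst : s ≤ t)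
    (ht : t ^ 2 = s ^ 2 + D ^ 2) (haR : a ≤ R) (hsR : s ≤ R) (hRR : R ≤ R')
    (hbR : a + D ≤ R') (htR : t ≤ R') (hR : R' - R ≤ t - s ∨ (R' = a + D ∧ R' - R > t - s)) :
    R' + (max 0 (a + D + t - R')) ^ 2 / (2 * t) - 3 * t
      ≤ R + (max 0 (a + s - R)) ^ 2 / (2 * s) - 3 * s + (max 0 (a + s - R) / s) * D := by
  have ht0 : 0 < t := by linarith
  have hDt : |D| ≤ t := abs_le_of_sq_le_sq (by rw [ht]; linarith [sq_nonneg s]) ht0.le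
  have hD1 := le_abs_self D
  have hD2 := neg_abs_le D
  set w := max 0 (a + s - R) with hw
  have hw0 : 0 ≤ w := le_max_left _ _
  have hws : w ≤ s := max_le hs.le (by linarith)
  have hwge : a + s - R ≤ w := le_max_right _ _
  rcases hR with hR | ⟨hR, hR2⟩
  · set w' := max 0 (a + D + t - R') with hw'
    have hw0' : 0 ≤ w' := le_max_left _ _
    have hwt' : w' ≤ t := max_le ht0.le (by linarith)
    by_cases h3 : t ≤ 3 * s
    · have e0 : D ^ 2 / (2 * s) ≤ 2 * (t - s) := by
        rw [div_le_iff₀ (by positivity)]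
        have h2 : D ^ 2 = (t - s) * (t + s) := by linear_combination -ht
        have h4 : (t - s) * (t + s) ≤ (t - s) * (4 * s) :=
          mul_le_mul_of_nonneg_left (by linarith) (by linarith)
        linarith
      have e1 : w ^ 2 / (2 * s) + (w / s) * D = (w + D) ^ 2 / (2 * s) - D ^ 2 / (2 * s) := by
        field_simp; ring
      have e2 : w' ^ 2 / (2 * t) ≤ (w + D) ^ 2 / (2 * s) + ((t - s) - (R' - R)) / 2 := by
        have hu : w' ^ 2 ≤ (w + D + ((t - s) - (R' - R))) ^ 2 := by
          rcases le_total (a + D + t - R') 0 with h | h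
          · rw [hw', max_eq_left h]; simpa using sq_nonneg _
          · rw [hw', max_eq_right h]
            apply pow_le_pow_left₀ h
            linarith
        set u := w + D
        set e := t - s with he
        have hte : t = s + e := by rw [he]; ring
        set f := e - (R' - R) with hf
        have hf0 : 0 ≤ f := by linarith
        have hfe : f ≤ e := by linarith
        rw [div_le_iff₀ (by positivity)]
        have : (u ^ 2 / (2 * s) + f / 2) * (2 * t) = u ^ 2 + u ^ 2 * e / s + f * t := by
          rw [hte]; field_simp
        rw [this]
        have h5 : 2 * u * f ≤ u ^ 2 * e / s + f * s := by
          rw [← sub_nonneg]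
          have : u ^ 2 * e / s + f * s - 2 * u * f = (u ^ 2 * (e - f) + f * (u - s) ^ 2) / s := by
            field_simp; ring
          rw [this]
          have : 0 ≤ e - f := by linarith
          positivity
        have h6 : (u + f) ^ 2 = u ^ 2 + 2 * u * f + f * f := by ring
        have h7 : f * t = f * s + f * e := by rw [hte]; ring
        have h8 : f * f ≤ f * e := mul_le_mul_of_nonneg_left hfe hf0
        linarith
      linarith
    · push Not at h3
      have hsd : s ≤ |D| := by
        apply abs_le_of_sq_le_sq' _ (abs_nonneg D) |>.2
        rw [sq_abs]
        have h1 : (3 * s) ^ 2 ≤ t ^ 2 := pow_le_pow_left₀ (by linarith) h3.le 2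
        have h2 : (3 * s) ^ 2 = 9 * s ^ 2 := by ring
        linarith [sq_nonneg s]
      have e1 : w' ^ 2 / (2 * t) ≤ t / 2 := by
        rw [div_le_iff₀ (by positivity)]
        have h1 : w' ^ 2 ≤ t ^ 2 := pow_le_pow_left₀ hw0' hwt' 2
        linarith
      have e2 : -(w / s) * D - w ^ 2 / (2 * s) ≤ |D| - s / 2 := by
        have : -(w / s) * D - w ^ 2 / (2 * s) = (2 * w * (-D) - w ^ 2) / (2 * s) := by
          field_simp
        rw [this, div_le_iff₀ (by positivity)]
        have h1 : w * (-D) ≤ w * |D| := mul_le_mul_of_nonneg_left (by linarith) hw0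
        have h2 : 0 ≤ (s - w) * (|D| - s) := mul_nonneg (by linarith) (by linarith)
        linarith [sq_nonneg (s - w)]
      linarith
  · have hw' : max 0 (a + D + t - R') = t := by
      rw [hR]; rw [max_eq_right] <;> linarith
    rw [hw']
    have hwpos : 0 < a + s - R := by
      by_contra hcon
      push Not at hcon
      linarith
    have hwe : w = a + s - R := max_eq_right hwpos.le
    have e1 : t ^ 2 / (2 * t) = t / 2 := by field_simp
    have e2 : (w / s) * D + w ^ 2 / (2 * s) = (2 * w * D + w ^ 2) / (2 * s) := by field_simp
    have e3 : w + D - s - 2.5 * (t - s) + (t - s) / 2 - (t - s) / 2 + s/2 + 0 ≤ (2 * w * D + w ^ 2) / (2 * s) := by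
      rw [le_div_iff₀ (by positivity)]
      suffices h : 2 * D * (s - w) - (s - w) ^ 2 ≤ 5 * (s * (t - s)) by
        have e : (w + D - s - 2.5 * (t - s) + (t - s) / 2 - (t - s) / 2 + s/2 + 0) * (2 * s)
          = 2 * D * (s - w) - (s - w) ^ 2 - 5 * (s * (t - s)) + (2 * w * D + w ^ 2) := by ring
        rw [e]; linarith
      have hst' : 0 ≤ s * (t - s) := mul_nonneg hs.le (by linarith)
      by_cases h3 : t ≤ 3 * s
      · have h1 : 2 * D * (s - w) - (s - w) ^ 2 ≤ D ^ 2 := by nlinarith [sq_nonneg (D - (s - w))]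
        have h2 : D ^ 2 = (t - s) * (t + s) := by linarith
        have h4 : (t - s) * (t + s) ≤ (t - s) * (4 * s) :=
          mul_le_mul_of_nonneg_left (by linarith) (by linarith)
        linarith
      · push Not at h3
        have hsd : s ≤ D := by linarith
        have h1 : 2 * D * (s - w) - (s - w) ^ 2 = 2 * D * s - s ^ 2 - (2 * (w * (D - s)) + w ^ 2) := by
          ring
        have h2 : 0 ≤ w * (D - s) := mul_nonneg hw0 (by linarith)
        have h4 : s * D ≤ s * t := mul_le_mul_of_nonneg_left (by linarith) hs.le
        have h5 : s * (3 * s) ≤ s * t := mul_le_mul_of_nonneg_left h3.le hs.le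
        have h6 : s * (t - s) = s * t - s ^ 2 := by ring
        have h7 : s * (3 * s) = 3 * s ^ 2 := by ring
        have h8 : 2 * D * s = 2 * (s * D) := by ring
        linarith [sq_nonneg w, sq_nonneg s]
    have : R' - R = w + D - s := by rw [hR, hwe]; ring
    linarith

lemma wb_bounds {x s m : ℝ} (hs : 0 ≤ s) (hm : |x| ≤ m) :
    0 ≤ wb x s m ∧ wb x s m ≤ s ∧ wb x s m ≤ |x| := by
  have h1 : m ≤ max m s := le_max_left _ _
  have h2 : s ≤ max m s := le_max_right _ _
  refine ⟨le_max_left _ _, max_le hs (by linarith), max_le (abs_nonneg _) (by linarith)⟩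

lemma step_b_pos {x d s t m : ℝ} (hs : 0 < s) (hst : s ≤ t) (ht : t ^ 2 = s ^ 2 + d ^ 2)
    (hm : |x| ≤ m) (hx : 0 ≤ x) :
    Vb (x + d) t (max m |x + d|) ≤ Vb x s m + wb x s m / s * d := by
  have hxa : |x| = x := abs_of_nonneg hx
  have ht0 : 0 < t := by linarith
  have hdt : |d| ≤ t := abs_le_of_sq_le_sq (by rw [ht]; linarith [sq_nonneg s]) ht0.le
  obtain ⟨w0, w1, w2⟩ := wb_bounds hs.le hm
  have hm' : |x + d| ≤ max m |x + d| := le_max_right _ _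
  obtain ⟨v0, v1, v2⟩ := wb_bounds ht0.le hm'
  rcases le_or_gt 0 (x + d) with h | h
  · have hxd : |x + d| = x + d := abs_of_nonneg h
    have := @core_b_same x d s t (max m s) (max (max m |x + d|) t) hx h hs hst ht
      (by rw [← hxa]; exact hm.trans (le_max_left _ _)) (le_max_right _ _)
      (max_le_max (le_max_left _ _) hst) (by rw [hxd]; simp) (le_max_right _ _)
      (by
        rw [hxd]
        by_cases hc : max (max m (x + d)) t - max m s ≤ t - s
        · exact Or.inl hc
        · right
          push Not at hc
          refine ⟨?_, hc⟩
          have h1 := le_max_left m s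
          have h2 := le_max_right m s
          have h3 : max m s + (t - s) < max (max m (x + d)) t := by linarith
          rw [lt_max_iff, lt_max_iff] at h3
          rcases h3 with (h3 | h3) | h3
          · linarith
          · rw [max_eq_right (by linarith : m ≤ x + d), max_eq_left (by linarith)]
          · linarith)
    unfold Vb wb
    rw [hxa]
    nth_rewrite 2 [hxd]
    linarith
  · have hxd : |x + d| = -(x + d) := abs_of_neg h
    have hd : |d| = -d := abs_of_neg (by linarith)
    have := @core_b_opp x (-(x + d)) s t m (wb x s m) (wb (x + d) t (max m |x + d|))
      (max m s) (max (max m |x + d|) t) hx (by linarith) hs hst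
      (by rw [ht]; ring) w0 w1 (by linarith) v0 (by linarith) v1
      (by
        have h1 := le_max_left m s
        have h2 := le_max_right m s
        have : max (max m |x + d|) t ≤ max m s + (t - s) :=
          max_le (max_le (by linarith) (by linarith)) (by linarith)
        linarith)
    unfold Vb
    have e : wb x s m / s * (x + -(x + d)) = - (wb x s m / s * d) := by ring
    linarith

lemma Vb_neg (x s m : ℝ) : Vb (-x) s m = Vb x s m := by simp [Vb, wb]

lemma step_b {x d s t m : ℝ} (hs : 0 ≤ s) (h0 : s = 0 → x = 0 ∧ m = 0) (hst : s ≤ t)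
    (ht : t ^ 2 = s ^ 2 + d ^ 2) (hm : |x| ≤ m) :
    Vb (x + d) t (max m |x + d|) ≤ Vb x s m + hb x s m * d := by
  rcases hs.eq_or_lt with h | hs
  · obtain ⟨rfl, rfl⟩ := h0 h.symm
    subst h
    have htd : t = |d| := by
      rw [← abs_of_nonneg hst, ← sq_eq_sq_iff_abs_eq_abs]; linarith
    subst htd
    rcases eq_or_ne d 0 with rfl | hd
    · simp [Vb, wb, hb]
    · have hd' : 0 < |d| := abs_pos.2 hd
      have : |d| ^ 2 / (2 * |d|) = |d| / 2 := by field_simp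
      simp only [Vb, wb, hb, zero_add, max_eq_right (abs_nonneg d), max_self, abs_zero]
      simp only [add_sub_cancel_right, max_eq_right (abs_nonneg d), this]
      simp
      linarith
  · unfold hb
    split_ifs with hx
    · simpa using step_b_pos hs hst ht hm hx
    · have := @step_b_pos (-x) (-d) s t m hs hst (by rw [ht]; ring) (by rwa [abs_neg])
        (by linarith)
      rw [← neg_add, abs_neg, Vb_neg, Vb_neg] at this
      have e : wb (-x) s m = wb x s m := by simp [wb]
      rw [e] at this
      linarith

lemma Vb_le {x d s t m : ℝ} (hs : 0 ≤ s) (hst : s ≤ t)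
    (ht : t ^ 2 = s ^ 2 + d ^ 2) (hm : |x| ≤ m) :
    Vb (x + d) t (max m |x + d|) ≤ m := by
  have ht0 : 0 ≤ t := hs.trans hst
  have hdt : |d| ≤ t := abs_le_of_sq_le_sq (by rw [ht]; linarith [sq_nonneg s]) ht0
  obtain ⟨v0, v1, v2⟩ := wb_bounds ht0 (le_max_right m |x + d|)
  have hm0 : 0 ≤ m := (abs_nonneg x).trans hm
  have h1 : max (max m |x + d|) t ≤ m + t :=
    max_le (max_le (by linarith) ((abs_add_le x d).trans (by linarith))) (by linarith)
  have h2 : wb (x + d) t (max m |x + d|) ^ 2 / (2 * t) ≤ t / 2 := by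
    rcases ht0.eq_or_lt with rfl | ht0
    · simp
    · rw [div_le_iff₀ (by positivity)]
      have h1 := pow_le_pow_left₀ v0 v1 2
      linarith
  unfold Vb
  linarith

lemma Vb_ge {x s m : ℝ} (hs : 0 ≤ s) : m - 3 * s ≤ Vb x s m := by
  unfold Vb
  have := le_max_left m s
  have : 0 ≤ wb x s m ^ 2 / (2 * s) := by positivity
  linarith

lemma hb_le {x s m : ℝ} (hs : 0 ≤ s) (hm : |x| ≤ m) : |hb x s m| ≤ 1 := by
  obtain ⟨w0, w1, w2⟩ := wb_bounds hs hm
  unfold hb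
  rw [abs_mul, abs_of_nonneg (div_nonneg w0 hs)]
  have : |(if 0 ≤ x then (1:ℝ) else -1)| = 1 := by split_ifs <;> simp
  rw [this, one_mul]
  exact div_le_one_of_le₀ w1 hs

/-- potential for the lower Davis inequality -/
def Va (x s m : ℝ) : ℝ := (m ^ 2 - x ^ 2) / (2 * √(s ^ 2 + m ^ 2)) + √(s ^ 2 + m ^ 2) - 3 * m
def ha (x s m : ℝ) : ℝ := -x / √(s ^ 2 + m ^ 2)

lemma Va_ge {x s m : ℝ} (hs : 0 ≤ s) (hm : |x| ≤ m) : s - 3 * m ≤ Va x s m := by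
  unfold Va
  have h1 : x ^ 2 ≤ m ^ 2 := sq_le_sq' (by linarith [neg_abs_le x]) ((le_abs_self x).trans hm)
  have h2 : s ≤ √(s ^ 2 + m ^ 2) := Real.le_sqrt_of_sq_le (by linarith [sq_nonneg m])
  have : 0 ≤ (m ^ 2 - x ^ 2) / (2 * √(s ^ 2 + m ^ 2)) := div_nonneg (by linarith) (by positivity)
  linarith

lemma ha_le {x s m : ℝ} (hm : |x| ≤ m) : |ha x s m| ≤ 1 := by
  unfold ha
  rw [abs_div, abs_neg, abs_of_nonneg (Real.sqrt_nonneg _)]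
  refine div_le_one_of_le₀ (hm.trans ?_) (Real.sqrt_nonneg _)
  exact Real.le_sqrt_of_sq_le (by linarith [sq_nonneg s])

lemma Va_le {x d s t m : ℝ} (hs : 0 ≤ s) (hst : s ≤ t)
    (ht : t ^ 2 = s ^ 2 + d ^ 2) (hm : |x| ≤ m) :
    Va (x + d) t (max m |x + d|) ≤ s := by
  set m' := max m |x + d| with hm'
  set b := |x + d| with hb
  have hmm : m ≤ m' := le_max_left _ _
  have hbm : b ≤ m' := le_max_right _ _
  have hb0 : 0 ≤ b := abs_nonneg _
  have hdb : |d| ≤ m' + b := by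
    have : |d| = |(x + d) - x| := by congr 1; ring
    rw [this]; exact (abs_sub _ _).trans (by linarith)
  have h1 : (x + d) ^ 2 = b ^ 2 := (sq_abs _).symm
  set r := √(t ^ 2 + m' ^ 2) with hr
  have hrm : m' ≤ r := Real.le_sqrt_of_sq_le (by linarith [sq_nonneg t])
  have hrs : r ≤ s + 2 * m' + b := by
    apply Real.sqrt_le_iff.2 ⟨by linarith, ?_⟩
    have : d ^ 2 ≤ (m' + b) ^ 2 := by rw [← sq_abs d]; exact pow_le_pow_left₀ (abs_nonneg _) hdb 2
    rw [ht]
    nlinarith [mul_nonneg hs (by linarith : 0 ≤ m'), mul_nonneg hs hb0, mul_nonneg hb0 (by linarith : 0 ≤ m')]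
  have h2 : (m' ^ 2 - b ^ 2) / (2 * r) ≤ m' - b := by
    rcases (by linarith : 0 ≤ r).eq_or_lt with h | h
    · rw [← h]; simp; exact hbm
    · rw [div_le_iff₀ (by positivity)]
      have : (m' - b) * (m' + b) ≤ (m' - b) * (2 * r) :=
        mul_le_mul_of_nonneg_left (by linarith) (by linarith)
      linarith
  unfold Va
  rw [h1, ← hr]
  linarith

lemma step_a {x d s t m : ℝ} (hs : 0 ≤ s) (h0 : s = 0 → x = 0 ∧ m = 0) (hst : s ≤ t)
    (ht : t ^ 2 = s ^ 2 + d ^ 2) (hm : |x| ≤ m) :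
    Va (x + d) t (max m |x + d|) ≤ Va x s m + ha x s m * d := by
  have hm0 : 0 ≤ m := (abs_nonneg x).trans hm
  rcases hs.eq_or_lt with h | hs
  · obtain ⟨rfl, rfl⟩ := h0 h.symm
    subst h
    have htd : t = |d| := by
      rw [← abs_of_nonneg hst, ← sq_eq_sq_iff_abs_eq_abs]; linarith
    subst htd
    simp only [Va, ha, zero_add, max_eq_right (abs_nonneg d), sq_abs]
    have : √(d ^ 2 + d ^ 2) ≤ 3 * |d| :=
      Real.sqrt_le_iff.2 ⟨by positivity, by rw [mul_pow, sq_abs]; nlinarith [sq_nonneg d]⟩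
    simp
    linarith
  · have hr0 : 0 < √(s ^ 2 + m ^ 2) := Real.sqrt_pos.2 (by positivity)
    have hr2 : √(s ^ 2 + m ^ 2) ^ 2 = s ^ 2 + m ^ 2 := Real.sq_sqrt (by positivity)
    have hrm : m ≤ √(s ^ 2 + m ^ 2) := Real.le_sqrt_of_sq_le (by linarith [sq_nonneg s])
    set m' := max m |x + d| with hm'
    have hr2' : √(t ^ 2 + m' ^ 2) ^ 2 = t ^ 2 + m' ^ 2 := Real.sq_sqrt (by positivity)
    have hmm : m ≤ m' := le_max_left _ _
    unfold Va ha
    set r := √(s ^ 2 + m ^ 2)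
    set r' := √(t ^ 2 + m' ^ 2)
    have hrr : r ≤ r' := by
      apply Real.sqrt_le_sqrt
      have := pow_le_pow_left₀ hm0 hmm 2
      linarith [sq_nonneg d]
    have hr0' : 0 < r' := by linarith
    have hx2 : (x + d) ^ 2 ≤ m' ^ 2 := by
      rw [← sq_abs]; exact pow_le_pow_left₀ (abs_nonneg _) (le_max_right _ _) 2
    have e1 : (m' ^ 2 - (x + d) ^ 2) / (2 * r') ≤ (m' ^ 2 - (x + d) ^ 2) / (2 * r) := by
      apply div_le_div_of_nonneg_left (by linarith) (by positivity) (by linarith)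
    have e2 : (m' ^ 2 - (x + d) ^ 2) / (2 * r) =
      (m ^ 2 - x ^ 2) / (2 * r) + -x / r * d + (m' ^ 2 - m ^ 2 - d ^ 2) / (2 * r) := by
      field_simp; ring
    suffices h : (m' ^ 2 - m ^ 2 - d ^ 2) / (2 * r) + r' - r ≤ 3 * (m' - m) by linarith
    have hdd : m' - m ≤ |d| := by
      have : |x + d| ≤ |x| + |d| := abs_add_le _ _
      have := abs_nonneg d
      have : m' ≤ m + |d| := max_le (by linarith) (by linarith)
      linarith
    set δ := m' - m with hδ
    have hδ0 : 0 ≤ δ := by linarith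
    have hme : m' = m + δ := by rw [hδ]; ring
    have hδd : δ ^ 2 ≤ d ^ 2 := by rw [← sq_abs d]; exact pow_le_pow_left₀ hδ0 hdd 2
    obtain ⟨c, hc⟩ : ∃ c, c = d ^ 2 - δ ^ 2 := ⟨_, rfl⟩
    have hc0 : 0 ≤ c := by linarith
    have k1 : r' ≤ r + c / (2 * r) + 2 * δ := by
      refine (abs_le_of_sq_le_sq' ?_ (by positivity)).2
      have hcc : r * (c / (2 * r)) = c / 2 := by field_simp
      have hcp : 0 ≤ c / (2 * r) := by positivity
      have a1 : r * δ ≥ m * δ := mul_le_mul_of_nonneg_right hrm hδ0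
      have a2 : (r + c / (2 * r) + 2 * δ) ^ 2 = r ^ 2 + 2 * (r * (c / (2 * r))) + (c / (2 * r)) ^ 2
        + 4 * (r * δ) + 4 * ((c / (2 * r)) * δ) + 4 * δ ^ 2 := by ring
      rw [a2, hr2', hcc, hr2, ht, hme]
      have : 0 ≤ (c / (2 * r)) * δ := by positivity
      have : 0 ≤ m * δ := by positivity
      linarith [sq_nonneg (c / (2 * r)), sq_nonneg δ]
    have k2 : (m' ^ 2 - m ^ 2 - d ^ 2) / (2 * r) = m * δ / r - c / (2 * r) := by
      rw [hme, hc]; field_simp; ring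
    have k3 : m * δ / r ≤ δ := by
      rw [div_le_iff₀ hr0, mul_comm]; exact mul_le_mul_of_nonneg_left hrm hδ0
    rw [k2]; linarith

lemma young_p {p a b : ℝ} (hp : 1 ≤ p) (ha : 0 ≤ a) (hb : 0 ≤ b) :
    a * b ^ (p - 1) ≤ a ^ p / p + (p - 1) / p * b ^ p := by
  have hp0 : 0 < p := by linarith
  have := Real.geom_mean_le_arith_mean2_weighted (w₁ := 1 / p) (w₂ := (p - 1) / p)
    (by positivity) (div_nonneg (by linarith) hp0.le) (Real.rpow_nonneg ha p) (Real.rpow_nonneg hb p)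
    (by field_simp; ring)
  rw [← Real.rpow_mul ha, ← Real.rpow_mul hb, mul_one_div_cancel hp0.ne', Real.rpow_one,
    mul_div_cancel₀ _ hp0.ne'] at this
  linarith [this, (by ring : 1 / p * a ^ p = a ^ p / p)]

lemma garsia {p : ℝ} (hp : 1 ≤ p) (A V Z u : ℕ → ℝ) (hA0 : ∀ n, 0 ≤ A n)
    (hA : ∀ n, A n ≤ A (n + 1)) (hZ : ∀ n, 0 ≤ Z n)
    (hV0 : V 0 ≤ 0) (hstep : ∀ n, V (n + 1) ≤ V n + u n) (hVA : ∀ n, V (n + 1) ≤ A n)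
    (hge : ∀ n, A n - 3 * Z n ≤ V n) (N : ℕ) :
    A N ^ p ≤ (3 * p) ^ p * Z N ^ p + ∑ n ∈ Finset.range N, p ^ 2 * A n ^ (p - 1) * u n := by
  have hp0 : 0 < p := by linarith
  have hA1 : ∀ n, A n ^ (p - 1) * A n = A n ^ p := fun n => by
    rw [← Real.rpow_add_one' (hA0 n) (by linarith)]; congr 1; ring
  have key : ∀ n, A n ^ (p - 1) * V n - (p - 1) / p * A n ^ p
      ≤ ∑ k ∈ Finset.range n, A k ^ (p - 1) * u k := by
    intro n
    induction n with
    | zero =>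
      have h1 : A 0 ^ (p - 1) * V 0 ≤ 0 :=
        mul_nonpos_of_nonneg_of_nonpos (Real.rpow_nonneg (hA0 0) _) hV0
      have h2 : 0 ≤ (p - 1) / p * A 0 ^ p :=
        mul_nonneg (div_nonneg (by linarith) hp0.le) (Real.rpow_nonneg (hA0 0) _)
      simp; linarith
    | succ n ih =>
      rw [Finset.sum_range_succ]
      have y := young_p hp (hA0 n) (hA0 (n + 1))
      have hm : A n ^ (p - 1) ≤ A (n + 1) ^ (p - 1) :=
        Real.rpow_le_rpow (hA0 n) (hA n) (by linarith)
      have h1 : (A (n + 1) ^ (p - 1) - A n ^ (p - 1)) * V (n + 1)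
          ≤ (A (n + 1) ^ (p - 1) - A n ^ (p - 1)) * A n :=
        mul_le_mul_of_nonneg_left (hVA n) (by linarith)
      have h2 : A n ^ (p - 1) * V (n + 1) ≤ A n ^ (p - 1) * (V n + u n) :=
        mul_le_mul_of_nonneg_left (hstep n) (Real.rpow_nonneg (hA0 n) _)
      have h3 := hA1 n
      have h4 : (p - 1) / p * A n ^ p = A n ^ p - A n ^ p / p := by field_simp
      linarith
  have k := key N
  have h1 : A N ^ (p - 1) * (A N - 3 * Z N) ≤ A N ^ (p - 1) * V N :=
    mul_le_mul_of_nonneg_left (hge N) (Real.rpow_nonneg (hA0 N) _)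
  have y := young_p hp (by have := hZ N; positivity : 0 ≤ 3 * p * Z N) (hA0 N)
  rw [Real.mul_rpow (by positivity) (hZ N)] at y
  have h3 := hA1 N
  have e : ∑ n ∈ Finset.range N, p ^ 2 * A n ^ (p - 1) * u n
    = p ^ 2 * ∑ n ∈ Finset.range N, A n ^ (p - 1) * u n := by
    rw [Finset.mul_sum]; exact Finset.sum_congr rfl fun _ _ => by ring
  rw [e]
  set Sg := ∑ n ∈ Finset.range N, A n ^ (p - 1) * u n
  have h4 : (p - 1) / p * A N ^ p = A N ^ p - A N ^ p / p := by field_simp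
  have h5 : A N ^ p / p ≤ 3 * Z N * A N ^ (p - 1) + Sg := by linarith
  have h6 : p * (A N ^ p / p) ≤ p * (3 * Z N * A N ^ (p - 1) + Sg) :=
    mul_le_mul_of_nonneg_left h5 hp0.le
  have h7 : p * (A N ^ p / p) = A N ^ p := by field_simp
  have h8 : A N ^ p / p ≤ ((3 * p) ^ p * Z N ^ p) / p + p * Sg := by linarith
  have h9 := mul_le_mul_of_nonneg_left h8 hp0.le
  have h10 : p * (((3 * p) ^ p * Z N ^ p) / p + p * Sg) = (3 * p) ^ p * Z N ^ p + p ^ 2 * Sg := by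
    field_simp
  linarith

def sq_ (x : ℕ → ℝ) (n : ℕ) : ℝ := √(∑ k ∈ Finset.range n, (x (k + 1) - x k) ^ 2)
def mx_ (x : ℕ → ℝ) : ℕ → ℝ
  | 0 => |x 0|
  | n + 1 => max (mx_ x n) |x (n + 1)|

lemma mx_ge (x : ℕ → ℝ) (n : ℕ) : |x n| ≤ mx_ x n := by
  cases n with
  | zero => exact le_rfl
  | succ n => exact le_max_right _ _

lemma mx_nonneg (x : ℕ → ℝ) (n : ℕ) : 0 ≤ mx_ x n := (abs_nonneg _).trans (mx_ge x n)

lemma sq_step (x : ℕ → ℝ) (n : ℕ) : sq_ x n ≤ sq_ x (n + 1) ∧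
    sq_ x (n + 1) ^ 2 = sq_ x n ^ 2 + (x (n + 1) - x n) ^ 2 := by
  have h : ∀ n, 0 ≤ ∑ k ∈ Finset.range n, (x (k + 1) - x k) ^ 2 := fun n =>
    Finset.sum_nonneg fun _ _ => sq_nonneg _
  refine ⟨Real.sqrt_le_sqrt ?_, ?_⟩
  · rw [Finset.sum_range_succ]; linarith [sq_nonneg (x (n + 1) - x n)]
  · unfold sq_; rw [Real.sq_sqrt (h _), Real.sq_sqrt (h _), Finset.sum_range_succ]

lemma sq_nonneg' (x : ℕ → ℝ) (n : ℕ) : 0 ≤ sq_ x n := Real.sqrt_nonneg _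

lemma sq_zero_state (x : ℕ → ℝ) (hx : x 0 = 0) (n : ℕ) (h : sq_ x n = 0) :
    x n = 0 ∧ mx_ x n = 0 := by
  induction n with
  | zero => simp [hx, mx_]
  | succ n ih =>
    obtain ⟨h1, h2⟩ := sq_step x n
    have h3 : sq_ x n = 0 := le_antisymm (h ▸ h1) (sq_nonneg' _ _)
    obtain ⟨i1, i2⟩ := ih h3
    rw [h, h3, i1] at h2
    have h4 : x (n + 1) = 0 := by
      have : x (n + 1) ^ 2 = 0 := by linarith
      simpa using this
    refine ⟨h4, ?_⟩
    simp [mx_, i2, h4]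

/-- deterministic inequality, upper part -/
lemma det_b {p : ℝ} (hp : 1 ≤ p) (x : ℕ → ℝ) (hx : x 0 = 0) (N : ℕ) :
    mx_ x N ^ p ≤ (3 * p) ^ p * sq_ x N ^ p + ∑ n ∈ Finset.range N,
      p ^ 2 * mx_ x n ^ (p - 1) * hb (x n) (sq_ x n) (mx_ x n) * (x (n + 1) - x n) := by
  have := garsia hp (fun n => mx_ x n) (fun n => Vb (x n) (sq_ x n) (mx_ x n)) (fun n => sq_ x n)
    (fun n => hb (x n) (sq_ x n) (mx_ x n) * (x (n + 1) - x n)) (mx_nonneg x)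
    (fun n => le_max_left _ _) (sq_nonneg' x) (by simp [Vb, wb, hx, sq_, mx_])
    (fun n => by
      have := step_b (d := x (n + 1) - x n) (sq_nonneg' x n) (sq_zero_state x hx n)
        (sq_step x n).1 (sq_step x n).2 (mx_ge x n)
      rwa [add_sub_cancel] at this)
    (fun n => by
      have := Vb_le (d := x (n + 1) - x n) (sq_nonneg' x n)
        (sq_step x n).1 (sq_step x n).2 (mx_ge x n)
      rwa [add_sub_cancel] at this)
    (fun n => Vb_ge (sq_nonneg' x n)) N
  simpa only [mul_assoc] using this

/-- deterministic inequality, lower part -/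
lemma det_a {p : ℝ} (hp : 1 ≤ p) (x : ℕ → ℝ) (hx : x 0 = 0) (N : ℕ) :
    sq_ x N ^ p ≤ (3 * p) ^ p * mx_ x N ^ p + ∑ n ∈ Finset.range N,
      p ^ 2 * sq_ x n ^ (p - 1) * ha (x n) (sq_ x n) (mx_ x n) * (x (n + 1) - x n) := by
  have := garsia hp (fun n => sq_ x n) (fun n => Va (x n) (sq_ x n) (mx_ x n)) (fun n => mx_ x n)
    (fun n => ha (x n) (sq_ x n) (mx_ x n) * (x (n + 1) - x n)) (sq_nonneg' x)
    (fun n => (sq_step x n).1) (mx_nonneg x) (by simp [Va, hx, sq_, mx_])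
    (fun n => by
      have := step_a (d := x (n + 1) - x n) (sq_nonneg' x n) (sq_zero_state x hx n)
        (sq_step x n).1 (sq_step x n).2 (mx_ge x n)
      rwa [add_sub_cancel] at this)
    (fun n => by
      have := Va_le (d := x (n + 1) - x n) (sq_nonneg' x n)
        (sq_step x n).1 (sq_step x n).2 (mx_ge x n)
      rwa [add_sub_cancel] at this)
    (fun n => Va_ge (sq_nonneg' x n) (mx_ge x n)) N
  simpa only [mul_assoc] using this

lemma const_ineq {p : ℝ} (hp : 1 < p) : (3 * p) ^ p ≤ 6 ^ p * (p - 1) ^ (p - 1) := by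
  have hp0 : 0 < p := by linarith
  have hq0 : 0 < p - 1 := by linarith
  have h6 : (6 : ℝ) ^ p = 3 ^ p * 2 ^ p := by rw [← Real.mul_rpow] <;> norm_num
  rw [Real.mul_rpow (by norm_num) hp0.le, h6, mul_assoc]
  refine mul_le_mul_of_nonneg_left ?_ (by positivity)
  have := Real.geom_mean_le_arith_mean2_weighted (w₁ := 1 / p) (w₂ := (p - 1) / p)
    (p₁ := p) (p₂ := p / (p - 1))
    (by positivity) (by positivity) hp0.le (by positivity)
    (by field_simp; ring)
  have e : 1 / p * p + (p - 1) / p * (p / (p - 1)) = 2 := by field_simp; norm_num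
  rw [e] at this
  have h2 := Real.rpow_le_rpow (by positivity) this hp0.le
  rw [Real.mul_rpow (by positivity) (by positivity), ← Real.rpow_mul hp0.le,
    ← Real.rpow_mul (by positivity), one_div_mul_cancel hp0.ne', div_mul_cancel₀ _ hp0.ne',
    Real.rpow_one, Real.div_rpow hp0.le hq0.le] at h2
  have h3 : p ^ p = p * p ^ (p - 1) := by
    rw [mul_comm, ← Real.rpow_add_one hp0.ne']; congr 1; ring
  have h4 : 0 < (p - 1) ^ (p - 1) := Real.rpow_pos_of_pos hq0 _
  rw [h3]
  rw [← mul_div_assoc, div_le_iff₀ h4] at h2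
  exact h2

def sm (a : ℝ≥0∞) (t : ℝ≥0) : ℝ≥0 := (min a (t : ℝ≥0∞)).toNNReal

lemma stopMin_eq (τ : Ω → ℝ≥0∞) (t : ℝ≥0) (ω : Ω) : stopMin τ t ω = sm (τ ω) t := rfl

lemma coe_sm (a : ℝ≥0∞) (t : ℝ≥0) : ((sm a t : ℝ≥0) : ℝ≥0∞) = min a t :=
  ENNReal.coe_toNNReal (ne_top_of_le_ne_top ENNReal.coe_ne_top (min_le_right _ _))

lemma sm_ext {a b : ℝ≥0∞} {t s : ℝ≥0} (h : min a (t : ℝ≥0∞) = min b (s : ℝ≥0∞)) :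
    sm a t = sm b s := by unfold sm; rw [h]

lemma sm_of_le {a : ℝ≥0∞} {t : ℝ≥0} (h : (t : ℝ≥0∞) ≤ a) : sm a t = t := by
  unfold sm; rw [min_eq_right h]; simp

lemma sm_le (a : ℝ≥0∞) (t : ℝ≥0) : sm a t ≤ t := by
  rw [← ENNReal.coe_le_coe, coe_sm]; exact min_le_right _ _

lemma sm_zero (t : ℝ≥0) : sm 0 t = 0 := by simp [sm]

lemma sm_at_zero (a : ℝ≥0∞) : sm a 0 = 0 := by simp [sm]

lemma sm_coe (s t : ℝ≥0) : sm (s : ℝ≥0∞) t = min s t := by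
  apply ENNReal.coe_injective; rw [coe_sm, ENNReal.coe_min]

lemma sm_sm (a b : ℝ≥0∞) (t : ℝ≥0) : sm a (sm b t) = sm (min a b) t := by
  apply sm_ext
  rw [coe_sm, min_assoc]

/-- Pathwise version of measurability w.r.t. the stopped σ-field. -/
def MS (M : MartingaleSpace Ω) (τ : Ω → ℝ≥0∞) (g : Ω → ℝ) : Prop :=
  ∀ t : ℝ≥0, Measurable[M.F t] ({ω | τ ω ≤ (t : ℝ≥0∞)}.indicator g)

variable {M : MartingaleSpace Ω}

lemma MS_of {τ : Ω → ℝ≥0∞} {g : Ω → ℝ} (hτ : M.IsStoppingTime τ) (h : M.MeasStopped τ g) :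
    MS M τ g := by
  intro t B hB
  classical
  by_cases h0 : (0 : ℝ) ∈ B
  · have : ({ω | τ ω ≤ (t : ℝ≥0∞)}.indicator g) ⁻¹' B
        = {ω | g ω ∈ B ∧ τ ω ≤ (t : ℝ≥0∞)} ∪ {ω | τ ω ≤ (t : ℝ≥0∞)}ᶜ := by
      ext ω
      by_cases hω : τ ω ≤ (t : ℝ≥0∞) <;> simp [indicator, hω, h0]
    rw [this]
    exact MeasurableSet.union (h B hB t) (hτ t).compl
  · have : ({ω | τ ω ≤ (t : ℝ≥0∞)}.indicator g) ⁻¹' B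
        = {ω | g ω ∈ B ∧ τ ω ≤ (t : ℝ≥0∞)} := by
      ext ω
      by_cases hω : τ ω ≤ (t : ℝ≥0∞) <;> simp [indicator, hω, h0]
    rw [this]
    exact h B hB t

lemma MS_to {τ : Ω → ℝ≥0∞} {g : Ω → ℝ} (hτ : M.IsStoppingTime τ) (h : MS M τ g) :
    M.MeasStopped τ g := by
  intro B hB t
  have : {ω | g ω ∈ B ∧ τ ω ≤ (t : ℝ≥0∞)}
      = ({ω | τ ω ≤ (t : ℝ≥0∞)}.indicator g) ⁻¹' B ∩ {ω | τ ω ≤ (t : ℝ≥0∞)} := by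
    ext ω
    by_cases hω : τ ω ≤ (t : ℝ≥0∞) <;> simp [indicator, hω]
  rw [this]
  exact MeasurableSet.inter (h t hB) (hτ t)

lemma st_mono {τ : Ω → ℝ≥0∞} (h : M.IsStoppingTime τ) {s t : ℝ≥0} (hst : s ≤ t) :
    MeasurableSet[M.F t] {ω | τ ω ≤ (s : ℝ≥0∞)} := M.mono hst _ (h s)

/-- `{a < b} ∩ {a ≤ t}` is known at time `t`. -/
lemma meas_lt {a b : Ω → ℝ≥0∞} (ha : M.IsStoppingTime a) (hb : M.IsStoppingTime b) (t : ℝ≥0) :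
    MeasurableSet[M.F t] {ω | a ω < b ω ∧ a ω ≤ (t : ℝ≥0∞)} := by
  have : {ω | a ω < b ω ∧ a ω ≤ (t : ℝ≥0∞)} =
      ({ω | a ω ≤ (t : ℝ≥0∞)} \ {ω | b ω ≤ (t : ℝ≥0∞)}) ∪
      ⋃ q : ℚ, ⋃ _ : (Real.toNNReal q) ≤ t,
        ({ω | a ω ≤ (Real.toNNReal q : ℝ≥0∞)} \ {ω | b ω ≤ (Real.toNNReal q : ℝ≥0∞)}) := by
    ext ω
    simp only [mem_ofPred_eq, mem_union, Set.mem_sdiff, mem_iUnion, not_le]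
    constructor
    · rintro ⟨h1, h2⟩
      rcases lt_or_ge (t : ℝ≥0∞) (b ω) with h | h
      · exact Or.inl ⟨h2, h⟩
      · right
        obtain ⟨q, hq0, hq1, hq2⟩ := ENNReal.lt_iff_exists_rat_btwn.1 h1
        exact ⟨q, by exact_mod_cast (hq2.le.trans h), hq1.le, hq2⟩
    · rintro (⟨h1, h2⟩ | ⟨q, hq, h1, h2⟩)
      · exact ⟨h1.trans_lt h2, h1⟩
      · exact ⟨h1.trans_lt h2, h1.trans (by exact_mod_cast hq)⟩
  rw [this]
  refine MeasurableSet.union ((ha t).diff (hb t)) (MeasurableSet.iUnion fun q =>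
    MeasurableSet.iUnion fun hq => ?_)
  exact (st_mono ha hq).diff (st_mono hb hq)

lemma meas_le {a b : Ω → ℝ≥0∞} (ha : M.IsStoppingTime a) (hb : M.IsStoppingTime b) (t : ℝ≥0) :
    MeasurableSet[M.F t] {ω | a ω ≤ b ω ∧ b ω ≤ (t : ℝ≥0∞)} := by
  have : {ω | a ω ≤ b ω ∧ b ω ≤ (t : ℝ≥0∞)}
      = {ω | b ω ≤ (t : ℝ≥0∞)} \ {ω | b ω < a ω ∧ b ω ≤ (t : ℝ≥0∞)} := by
    ext ω; simp only [mem_ofPred_eq, Set.mem_sdiff]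
    constructor
    · rintro ⟨h1, h2⟩; exact ⟨h2, fun h => absurd h.1 (not_lt.2 h1)⟩
    · rintro ⟨h1, h2⟩; exact ⟨not_lt.1 fun h => h2 ⟨h, h1⟩, h1⟩
  rw [this]
  exact (hb t).diff (meas_lt hb ha t)

lemma st_min {a b : Ω → ℝ≥0∞} (ha : M.IsStoppingTime a) (hb : M.IsStoppingTime b) :
    M.IsStoppingTime fun ω => min (a ω) (b ω) := by
  intro t
  have : {ω | min (a ω) (b ω) ≤ (t : ℝ≥0∞)} = {ω | a ω ≤ t} ∪ {ω | b ω ≤ t} := by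
    ext ω; simp
  rw [this]; exact (ha t).union (hb t)

lemma st_max {a b : Ω → ℝ≥0∞} (ha : M.IsStoppingTime a) (hb : M.IsStoppingTime b) :
    M.IsStoppingTime fun ω => max (a ω) (b ω) := by
  intro t
  have : {ω | max (a ω) (b ω) ≤ (t : ℝ≥0∞)} = {ω | a ω ≤ t} ∩ {ω | b ω ≤ t} := by
    ext ω; simp
  rw [this]; exact (ha t).inter (hb t)

lemma st_const (c : ℝ≥0∞) : M.IsStoppingTime fun _ => c := fun t => by
  by_cases h : c ≤ t <;> simp [h]

/-- a normalised strategy: the stopping times tend to infinity -/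
structure Str (M : MartingaleSpace Ω) (τ : ℕ → Ω → ℝ≥0∞) (g : ℕ → Ω → ℝ) : Prop where
  stpd : ∀ n, M.IsStoppingTime (τ n)
  mono : ∀ ω, Monotone fun n => τ n ω
  zero : ∀ ω, τ 0 ω = 0
  top : ∀ ω, Tendsto (fun n => τ n ω) atTop (𝓝 ⊤)
  meas : ∀ n, MS M (τ n) (g n)
  g_top : ∀ n ω, τ n ω = ⊤ → g n ω = 0

def Bd (g : ℕ → Ω → ℝ) : Prop := ∀ n, ∃ C : ℝ, ∀ ω, |g n ω| ≤ C

def Itg (τ : ℕ → Ω → ℝ≥0∞) (g : ℕ → Ω → ℝ) (X : ℝ≥0 → Ω → ℝ) (t : ℝ≥0) (ω : Ω) : ℝ :=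
  ∑' n : ℕ, g n ω * (X (sm (τ (n + 1) ω) t) ω - X (sm (τ n ω) t) ω)

lemma Str.ex {τ : ℕ → Ω → ℝ≥0∞} {g : ℕ → Ω → ℝ} (h : Str M τ g) (ω : Ω) (t : ℝ≥0) :
    ∃ N, ∀ n, N ≤ n → (t : ℝ≥0∞) ≤ τ n ω := by
  have := (h.top ω).eventually (eventually_ge_nhds (ENNReal.coe_lt_top (r := t)))
  exact eventually_atTop.1 this

lemma Itg_sum {τ : ℕ → Ω → ℝ≥0∞} (g : ℕ → Ω → ℝ) (X : ℝ≥0 → Ω → ℝ) {t : ℝ≥0} {ω : Ω} {N : ℕ}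
    (hN : ∀ n, N ≤ n → (t : ℝ≥0∞) ≤ τ n ω) :
    Itg τ g X t ω = ∑ n ∈ Finset.range N,
      g n ω * (X (sm (τ (n + 1) ω) t) ω - X (sm (τ n ω) t) ω) := by
  apply tsum_eq_sum
  intro n hn
  simp only [Finset.mem_range, not_lt] at hn
  rw [sm_of_le (hN n hn), sm_of_le (hN (n + 1) (by omega))]
  ring

lemma Itg_zero (τ : ℕ → Ω → ℝ≥0∞) (g : ℕ → Ω → ℝ) (X : ℝ≥0 → Ω → ℝ) (ω : Ω) :
    Itg τ g X 0 ω = 0 := by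
  simp [Itg, sm_at_zero]

/-- Stopping a strategy. -/
def stopT (τ : ℕ → Ω → ℝ≥0∞) (σ : Ω → ℝ≥0∞) : ℕ → Ω → ℝ≥0∞
  | 0, _ => 0
  | n + 1, ω => max (min (τ (n + 1) ω) (σ ω)) (τ n ω)

open Classical in
def stopG (τ : ℕ → Ω → ℝ≥0∞) (σ : Ω → ℝ≥0∞) (g : ℕ → Ω → ℝ) (n : ℕ) (ω : Ω) : ℝ :=
  if τ n ω < σ ω then g n ω else 0

lemma stopT_of_lt {τ : ℕ → Ω → ℝ≥0∞} {σ : Ω → ℝ≥0∞} {g : ℕ → Ω → ℝ} (h : Str M τ g) {n : ℕ} {ω : Ω}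
    (hlt : τ n ω < σ ω) : stopT τ σ n ω = τ n ω := by
  cases n with
  | zero => simp [stopT, h.zero]
  | succ n =>
    simp only [stopT]
    rw [min_eq_left hlt.le, max_eq_left (h.mono ω (Nat.le_succ n))]

lemma Bd_stop {τ : ℕ → Ω → ℝ≥0∞} {σ : Ω → ℝ≥0∞} {g : ℕ → Ω → ℝ} (h : Bd g) : Bd (stopG τ σ g) := by
  intro n
  obtain ⟨C, hC⟩ := h n
  refine ⟨|C|, fun ω => ?_⟩
  unfold stopG
  split_ifs
  · exact (hC ω).trans (le_abs_self _)
  · simp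

lemma Str_stop {τ : ℕ → Ω → ℝ≥0∞} {σ : Ω → ℝ≥0∞} {g : ℕ → Ω → ℝ} (h : Str M τ g)
    (hσ : M.IsStoppingTime σ) : Str M (stopT τ σ) (stopG τ σ g) where
  stpd n := by
    cases n with
    | zero => exact st_const 0
    | succ n => exact st_max (st_min (h.stpd _) hσ) (h.stpd _)
  mono ω := by
    apply monotone_nat_of_le_succ
    intro n
    cases n with
    | zero => simp [stopT]
    | succ n =>
      simp only [stopT]
      refine max_le ?_ ?_
      · exact (min_le_left _ _).trans (le_max_right _ _)
      · exact (h.mono ω (Nat.le_succ n)).trans (le_max_right _ _)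
  zero ω := rfl
  top ω := by
    rw [← tendsto_add_atTop_iff_nat 1]
    exact tendsto_nhds_top_mono (h.top ω) (Eventually.of_forall fun n => le_max_right _ _)
  meas n t := by
    have : {ω | stopT τ σ n ω ≤ (t : ℝ≥0∞)}.indicator (stopG τ σ g n) =
        {ω | τ n ω < σ ω ∧ τ n ω ≤ (t : ℝ≥0∞)}.indicator
          ({ω | τ n ω ≤ (t : ℝ≥0∞)}.indicator (g n)) := by
      ext ω
      simp only [indicator, mem_ofPred_eq, stopG]
      by_cases h1 : τ n ω < σ ω
      · simp [h1, stopT_of_lt h h1]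
        split_ifs <;> rfl
      · simp [h1]
    rw [this]
    exact (h.meas n t).indicator (meas_lt (h.stpd n) hσ t)
  g_top n ω hn := by
    unfold stopG
    split_ifs with h1
    · exact h.g_top n ω (by rw [← stopT_of_lt h h1, hn])
    · rfl

lemma Itg_stop {τ : ℕ → Ω → ℝ≥0∞} {σ : Ω → ℝ≥0∞} {g : ℕ → Ω → ℝ} (h : Str M τ g)
    (X : ℝ≥0 → Ω → ℝ) (t : ℝ≥0) (ω : Ω) :
    Itg (stopT τ σ) (stopG τ σ g) X t ω = Itg τ g X (sm (σ ω) t) ω := by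
  unfold Itg
  congr 1; ext n
  rw [sm_sm, sm_sm]
  unfold stopG
  split_ifs with h1
  · rw [stopT_of_lt h h1]
    have : stopT τ σ (n + 1) ω = min (τ (n + 1) ω) (σ ω) := by
      simp only [stopT]
      exact max_eq_left (le_min (h.mono ω (Nat.le_succ n)) h1.le)
    rw [this, min_eq_left h1.le]
  · push Not at h1
    rw [min_eq_right h1, min_eq_right (h1.trans (h.mono ω (Nat.le_succ n)))]
    ring

/-- Normalisation of a proper sequence. -/
def PP (T : ℕ → Ω → ℝ≥0∞) (n : ℕ) (ω : Ω) : Prop := ∃ m, T n ω < T m ω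

open Classical in
def nT (T : ℕ → Ω → ℝ≥0∞) : ℕ → Ω → ℝ≥0∞
  | 0, _ => 0
  | n + 1, ω => if PP T n ω then T (n + 1) ω else ⊤

open Classical in
def nG (T : ℕ → Ω → ℝ≥0∞) (g : ℕ → Ω → ℝ) (n : ℕ) (ω : Ω) : ℝ :=
  if PP T n ω then g n ω else 0

lemma PP_anti (T : ProperSeq M) {n : ℕ} {ω : Ω} (h : PP T.τ (n + 1) ω) : PP T.τ n ω := by
  obtain ⟨m, hm⟩ := h
  exact ⟨m, (T.mono ω (Nat.le_succ n)).trans_lt hm⟩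

lemma PP_meas (T : ProperSeq M) (n : ℕ) (t : ℝ≥0) :
    MeasurableSet[M.F t] {ω | PP T.τ n ω ∧ T.τ n ω ≤ (t : ℝ≥0∞)} := by
  have : {ω | PP T.τ n ω ∧ T.τ n ω ≤ (t : ℝ≥0∞)}
      = ⋃ m, {ω | T.τ n ω < T.τ m ω ∧ T.τ n ω ≤ (t : ℝ≥0∞)} := by
    ext ω; simp [PP]
  rw [this]
  exact MeasurableSet.iUnion fun m => meas_lt (T.stopping n) (T.stopping m) t

lemma nT_of {T : ProperSeq M} {n : ℕ} {ω : Ω} (h : PP T.τ n ω) : nT T.τ n ω = T.τ n ω := by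
  cases n with
  | zero => simp [nT, T.zero]
  | succ n => simp [nT, PP_anti T h]

lemma Str_norm (T : ProperSeq M) {g : ℕ → Ω → ℝ} (hg : ∀ n, MS M (T.τ n) (g n))
    (gt : ∀ n ω, T.τ n ω = ⊤ → g n ω = 0) : Str M (nT T.τ) (nG T.τ g) where
  stpd n := by
    cases n with
    | zero => exact st_const 0
    | succ n =>
      intro t
      have : {ω | nT T.τ (n + 1) ω ≤ (t : ℝ≥0∞)} =
          {ω | PP T.τ n ω ∧ T.τ n ω ≤ (t : ℝ≥0∞)} ∩ {ω | T.τ (n + 1) ω ≤ (t : ℝ≥0∞)} := by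
        ext ω
        simp only [mem_ofPred_eq, mem_inter_iff, nT]
        split_ifs with h
        · simp only [h, true_and]
          exact ⟨fun h' => ⟨(T.mono ω (Nat.le_succ n)).trans h', h'⟩, fun h' => h'.2⟩
        · simp [h]
      rw [this]
      exact (PP_meas T n t).inter (T.stopping _ t)
  mono ω := by
    apply monotone_nat_of_le_succ
    intro n
    cases n with
    | zero => simp [nT]
    | succ n =>
      by_cases h : PP T.τ (n + 1) ω
      · simp only [nT, h, PP_anti T h, if_true]; exact T.mono ω (Nat.le_succ _)
      · simp [nT, h]
  zero ω := rfl
  top ω := by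
    by_cases h : ∀ n, PP T.τ n ω
    · have : (fun n => nT T.τ n ω) = fun n => T.τ n ω := by ext n; exact nT_of (h n)
      rw [this]
      rcases T.proper ω with h1 | ⟨n, hn⟩
      · exact h1
      · obtain ⟨m, hm⟩ := h n
        rcases le_total n m with h2 | h2
        · rw [hn m h2] at hm; exact absurd hm (lt_irrefl _)
        · exact absurd hm (not_lt.2 (T.mono ω h2))
    · push Not at h
      obtain ⟨n, hn⟩ := h
      have h2 : ∀ k, ¬ PP T.τ (n + k) ω := by
        intro k
        induction k with
        | zero => exact hn
        | succ k ih => exact fun h => ih (PP_anti T h)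
      apply tendsto_const_nhds.congr'
      filter_upwards [eventually_ge_atTop (n + 1)] with m hm
      obtain ⟨k, rfl⟩ : ∃ k, m = n + k + 1 := ⟨m - n - 1, by omega⟩
      simp [nT, h2 k]
  meas n t := by
    have : {ω | nT T.τ n ω ≤ (t : ℝ≥0∞)}.indicator (nG T.τ g n) =
        {ω | PP T.τ n ω ∧ T.τ n ω ≤ (t : ℝ≥0∞)}.indicator
          ({ω | T.τ n ω ≤ (t : ℝ≥0∞)}.indicator (g n)) := by
      ext ω
      simp only [indicator, mem_ofPred_eq, nG]
      by_cases h1 : PP T.τ n ω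
      · simp [h1, nT_of h1]
        split_ifs <;> rfl
      · simp [h1]
    rw [this]
    exact (hg n t).indicator (PP_meas T n t)
  g_top n ω hn := by
    unfold nG
    split_ifs with h1
    · exact gt n ω (by rw [← nT_of h1, hn])
    · rfl

lemma Itg_norm (T : ProperSeq M) (g : ℕ → Ω → ℝ) (X : ℝ≥0 → Ω → ℝ) (t : ℝ≥0) (ω : Ω) :
    Itg (nT T.τ) (nG T.τ g) X t ω = Itg T.τ g X t ω := by
  unfold Itg
  congr 1; ext n
  unfold nG
  split_ifs with h1
  · rw [nT_of h1]
    have : nT T.τ (n + 1) ω = T.τ (n + 1) ω := by simp [nT, h1]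
    rw [this]
  · have : T.τ (n + 1) ω = T.τ n ω :=
      le_antisymm (not_lt.1 fun h => h1 ⟨_, h⟩) (T.mono ω (Nat.le_succ n))
    rw [this]; ring

lemma Bd_norm {T : ℕ → Ω → ℝ≥0∞} {g : ℕ → Ω → ℝ} (h : Bd g) : Bd (nG T g) := by
  intro n
  obtain ⟨C, hC⟩ := h n
  refine ⟨|C|, fun ω => ?_⟩
  unfold nG
  split_ifs
  · exact (hC ω).trans (le_abs_self _)
  · simp

lemma tele_one (f : ℝ≥0 → ℝ) (ρ : ℕ → ℝ≥0∞) (a b : ℝ≥0∞) (hab : a ≤ b) (t : ℝ≥0) (N : ℕ)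
    (h0 : ρ 0 = 0) (hmono : Monotone ρ)
    (hN : (t : ℝ≥0∞) ≤ ρ N) (ha : ∀ n, a ≤ ρ n ∨ ρ (n + 1) ≤ a)
    (hb : ∀ n, b ≤ ρ n ∨ ρ (n + 1) ≤ b) :
    ∑ n ∈ Finset.range N, (if a ≤ ρ n ∧ ρ n < b then f (sm (ρ (n + 1)) t) - f (sm (ρ n) t) else 0)
      = f (sm b t) - f (sm a t) := by
  let F : ℕ → ℝ := fun n => f (sm (max a (min (ρ n) b)) t)
  have h1 : ∀ n, (if a ≤ ρ n ∧ ρ n < b then f (sm (ρ (n + 1)) t) - f (sm (ρ n) t) else 0)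
      = F (n + 1) - F n := by
    intro n
    have hm : ρ n ≤ ρ (n + 1) := hmono (Nat.le_succ n)
    simp only [F]
    split_ifs with h
    · have hb' := (hb n).resolve_left (not_le.2 h.2)
      rw [min_eq_left hb', min_eq_left h.2.le, max_eq_right h.1, max_eq_right (h.1.trans hm)]
    · rcases ha n with h2 | h2
      · have h3 : b ≤ ρ n := not_lt.1 fun h' => h ⟨h2, h'⟩
        rw [min_eq_right h3, min_eq_right (h3.trans hm), sub_self]
      · rw [max_eq_left ((min_le_left _ _).trans h2),
          max_eq_left ((min_le_left _ _).trans (hm.trans h2)), sub_self]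
  rw [Finset.sum_congr rfl fun n _ => h1 n, Finset.sum_range_sub]
  have e0 : sm (max a (min (ρ 0) b)) t = sm a t := by
    rw [h0, min_eq_left (zero_le : 0 ≤ b), max_eq_left (zero_le : 0 ≤ a)]
  have e1 : sm (max a (min (ρ N) b)) t = sm b t := by
    rcases le_total b (ρ N) with h | h
    · rw [min_eq_right h, max_eq_right hab]
    · rw [min_eq_left h, sm_of_le (hN.trans (le_max_right _ _)), sm_of_le (hN.trans h)]
  simp only [F, e0, e1]

open Classical in
def rG (τ ρ : ℕ → Ω → ℝ≥0∞) (g : ℕ → Ω → ℝ) (n : ℕ) (ω : Ω) : ℝ :=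
  ∑ i ∈ Finset.range (n + 1), if τ i ω ≤ ρ n ω ∧ ρ n ω < τ (i + 1) ω then g i ω else 0

structure Refines (M : MartingaleSpace Ω) (ρ τ : ℕ → Ω → ℝ≥0∞) : Prop where
  stpd : ∀ n, M.IsStoppingTime (ρ n)
  mono : ∀ ω, Monotone fun n => ρ n ω
  zero : ∀ ω, ρ 0 ω = 0
  top : ∀ ω, Tendsto (fun n => ρ n ω) atTop (𝓝 ⊤)
  R : ∀ ω n i, τ i ω ≤ ρ n ω ∨ ρ (n + 1) ω ≤ τ i ω
  R2 : ∀ ω n, ρ n ω ≤ τ n ω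

lemma Str_refine {τ ρ : ℕ → Ω → ℝ≥0∞} {g : ℕ → Ω → ℝ} (h : Str M τ g) (hr : Refines M ρ τ) :
    Str M ρ (rG τ ρ g) where
  stpd := hr.stpd
  mono := hr.mono
  zero := hr.zero
  top := hr.top
  meas n t := by
    have : {ω | ρ n ω ≤ (t : ℝ≥0∞)}.indicator (rG τ ρ g n) = fun ω =>
        ∑ i ∈ Finset.range (n + 1),
          ({ω | τ i ω ≤ ρ n ω ∧ ρ n ω ≤ (t : ℝ≥0∞)} ∩
            {ω | ρ n ω < τ (i + 1) ω ∧ ρ n ω ≤ (t : ℝ≥0∞)}).indicator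
            ({ω | τ i ω ≤ (t : ℝ≥0∞)}.indicator (g i)) ω := by
      ext ω
      by_cases h1 : ρ n ω ≤ (t : ℝ≥0∞)
      · simp only [indicator, mem_ofPred_eq, h1, if_true, rG, mem_inter_iff, and_true]
        refine Finset.sum_congr rfl fun i _ => ?_
        split_ifs with h2 h3
        · rfl
        · exact absurd (h2.1.trans h1) h3
        · rfl
      · simp [indicator, h1]
    rw [this]
    refine Finset.measurable_sum _ fun i _ => ?_
    exact (h.meas i t).indicator ((meas_le (h.stpd i) (hr.stpd n) t).inter
      (meas_lt (hr.stpd n) (h.stpd (i + 1)) t))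
  g_top n ω hn := by
    unfold rG
    refine Finset.sum_eq_zero fun i _ => ?_
    simp [hn]

lemma Bd_refine {τ ρ : ℕ → Ω → ℝ≥0∞} {g : ℕ → Ω → ℝ} (h : Bd g) : Bd (rG τ ρ g) := by
  intro n
  choose C hC using h
  refine ⟨∑ i ∈ Finset.range (n + 1), |C i|, fun ω => ?_⟩
  unfold rG
  refine (Finset.abs_sum_le_sum_abs _ _).trans (Finset.sum_le_sum fun i _ => ?_)
  split_ifs
  · exact (hC i ω).trans (le_abs_self _)
  · simp

lemma Itg_refine {τ ρ : ℕ → Ω → ℝ≥0∞} {g : ℕ → Ω → ℝ} (h : Str M τ g) (hr : Refines M ρ τ)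
    (X : ℝ≥0 → Ω → ℝ) (t : ℝ≥0) (ω : Ω) : Itg ρ (rG τ ρ g) X t ω = Itg τ g X t ω := by
  classical
  obtain ⟨N1, hN1⟩ := h.ex ω t
  obtain ⟨N2, hN2⟩ := (Str_refine h hr).ex ω t
  let N := max N1 N2
  rw [Itg_sum g X (N := N) fun n hn => hN1 n ((le_max_left _ _).trans hn),
    Itg_sum _ X (N := N) fun n hn => hN2 n ((le_max_right _ _).trans hn)]
  have e1 : ∀ i, X (sm (τ (i + 1) ω) t) ω - X (sm (τ i ω) t) ω =
      ∑ n ∈ Finset.range N, (if τ i ω ≤ ρ n ω ∧ ρ n ω < τ (i + 1) ω then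
        X (sm (ρ (n + 1) ω) t) ω - X (sm (ρ n ω) t) ω else 0) := fun i =>
    (tele_one (fun s => X s ω) (fun n => ρ n ω) _ _ (h.mono ω (Nat.le_succ i)) t N (hr.zero ω)
      (hr.mono ω) (hN2 N (le_max_right _ _)) (fun n => hr.R ω n i) (fun n => hr.R ω n (i + 1))).symm
  simp_rw [e1, Finset.mul_sum]
  rw [Finset.sum_comm]
  refine Finset.sum_congr rfl fun n hn => ?_
  rw [Finset.mem_range] at hn
  unfold rG
  rw [Finset.sum_mul]
  rw [Finset.sum_subset (Finset.range_mono (by omega : n + 1 ≤ N))]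
  · refine Finset.sum_congr rfl fun i _ => ?_
    split_ifs <;> simp
  · intro i _ hi
    simp only [Finset.mem_range, not_lt] at hi
    split_ifs with h1
    · have : ρ (n + 1) ω = ρ n ω :=
        le_antisymm ((hr.R2 ω (n + 1)).trans ((h.mono ω hi).trans h1.1)) (hr.mono ω (Nat.le_succ n))
      rw [this]; ring
    · simp

def mT (σ τ : ℕ → Ω → ℝ≥0∞) (n : ℕ) (ω : Ω) : ℝ≥0∞ :=
  (Finset.range (n + 1)).inf fun i => max (σ i ω) (τ (n - i) ω)

lemma mT_le (σ τ : ℕ → Ω → ℝ≥0∞) {n i j : ℕ} (h : i + j = n) (ω : Ω) :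
    mT σ τ n ω ≤ max (σ i ω) (τ j ω) := by
  obtain rfl : j = n - i := by omega
  exact Finset.inf_le (f := fun i => max (σ i ω) (τ (n - i) ω)) (by simp; omega)

lemma mT_lt {σ τ : ℕ → Ω → ℝ≥0∞} {n : ℕ} {ω : Ω} {c : ℝ≥0∞} (h : mT σ τ n ω < c) :
    ∃ i j, i + j = n ∧ σ i ω < c ∧ τ j ω < c := by
  obtain ⟨i, hi, h⟩ := (Finset.inf_lt_iff).1 h
  simp only [Finset.mem_range] at hi
  rw [max_lt_iff] at h
  exact ⟨i, n - i, by omega, h.1, h.2⟩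

lemma le_mT {σ τ : ℕ → Ω → ℝ≥0∞} {n : ℕ} {ω : Ω} {c : ℝ≥0∞}
    (h : ∀ i j, i + j = n → c ≤ max (σ i ω) (τ j ω)) : c ≤ mT σ τ n ω := by
  refine Finset.le_inf fun i hi => h i _ ?_
  simp only [Finset.mem_range] at hi
  omega

lemma mT_props {σ τ : ℕ → Ω → ℝ≥0∞} {g h : ℕ → Ω → ℝ} (hσ : Str M σ g) (hτ : Str M τ h) :
    Refines M (mT σ τ) σ ∧ Refines M (mT σ τ) τ := by
  have hSTT : ∀ n, M.IsStoppingTime (mT σ τ n) := by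
    intro n t
    have : {ω | mT σ τ n ω ≤ (t : ℝ≥0∞)} =
        ⋃ i ∈ Finset.range (n + 1), {ω | max (σ i ω) (τ (n - i) ω) ≤ (t : ℝ≥0∞)} := by
      ext ω
      simp only [mem_ofPred_eq, mT, mem_iUnion]
      rw [Finset.inf_le_iff ENNReal.coe_lt_top]
      simp
      constructor <;> rintro ⟨i, a, b, c⟩ <;> exact ⟨i, b, a, c⟩
    rw [this]
    exact Finset.measurableSet_biUnion _ fun i _ => st_max (hσ.stpd i) (hτ.stpd _) t
  have hmono : ∀ ω, Monotone fun n => mT σ τ n ω := by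
    intro ω
    refine monotone_nat_of_le_succ fun n => le_mT fun i j hij => ?_
    cases j with
    | zero =>
      obtain rfl : i = n + 1 := by omega
      exact (mT_le σ τ (i := n) (j := 0) (by omega) ω).trans
        (max_le_max (hσ.mono ω (Nat.le_succ n)) le_rfl)
    | succ j =>
      exact (mT_le σ τ (i := i) (j := j) (by omega) ω).trans
        (max_le_max le_rfl (hτ.mono ω (Nat.le_succ j)))
  have hzero : ∀ ω, mT σ τ 0 ω = 0 := fun ω => by simp [mT, hσ.zero, hτ.zero]
  have htop : ∀ ω, Tendsto (fun n => mT σ τ n ω) atTop (𝓝 ⊤) := by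
    intro ω
    rw [ENNReal.tendsto_nhds_top_iff_nnreal]
    intro x
    obtain ⟨I, hI⟩ := hσ.ex ω (x + 1)
    obtain ⟨J, hJ⟩ := hτ.ex ω (x + 1)
    filter_upwards [eventually_ge_atTop (I + J)] with n hn
    have hx : (x : ℝ≥0∞) < ((x + 1 : ℝ≥0) : ℝ≥0∞) := by
      exact_mod_cast (lt_add_one x)
    refine hx.trans_le (le_mT fun i j hij => ?_)
    rcases le_or_gt I i with h1 | h1
    · exact (hI i h1).trans (le_max_left _ _)
    · exact (hJ j (by omega)).trans (le_max_right _ _)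
  refine ⟨⟨hSTT, hmono, hzero, htop, ?_, ?_⟩, ⟨hSTT, hmono, hzero, htop, ?_, ?_⟩⟩
  · intro ω n k
    refine or_iff_not_imp_left.2 fun hlt => ?_
    obtain ⟨i, j, hij, h1, h2⟩ := mT_lt (not_le.1 hlt)
    have hik : i + 1 ≤ k := by
      by_contra hc
      exact absurd h1 (not_lt.2 (hσ.mono ω (by omega : k ≤ i)))
    exact (mT_le σ τ (i := i + 1) (j := j) (by omega) ω).trans (max_le (hσ.mono ω hik) h2.le)
  · intro ω n
    exact (mT_le σ τ (i := n) (j := 0) (by omega) ω).trans (by simp [hτ.zero])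
  · intro ω n k
    refine or_iff_not_imp_left.2 fun hlt => ?_
    obtain ⟨i, j, hij, h1, h2⟩ := mT_lt (not_le.1 hlt)
    have hik : j + 1 ≤ k := by
      by_contra hc
      exact absurd h2 (not_lt.2 (hτ.mono ω (by omega : k ≤ j)))
    exact (mT_le σ τ (i := i) (j := j + 1) (by omega) ω).trans (max_le h1.le (hτ.mono ω hik))
  · intro ω n
    exact (mT_le σ τ (i := 0) (j := n) (by omega) ω).trans (by simp [hσ.zero])

lemma merge {σ τ : ℕ → Ω → ℝ≥0∞} {g h : ℕ → Ω → ℝ} (hσ : Str M σ g) (hτ : Str M τ h)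
    (bg : Bd g) (bh : Bd h) :
    ∃ ρ g' h', Str M ρ g' ∧ Str M ρ h' ∧ Bd g' ∧ Bd h' ∧
      (∀ X t ω, Itg ρ g' X t ω = Itg σ g X t ω) ∧ (∀ X t ω, Itg ρ h' X t ω = Itg τ h X t ω) := by
  obtain ⟨h1, h2⟩ := mT_props hσ hτ
  exact ⟨mT σ τ, rG σ (mT σ τ) g, rG τ (mT σ τ) h, Str_refine hσ h1, Str_refine hτ h2,
    Bd_refine bg, Bd_refine bh, Itg_refine hσ h1, Itg_refine hτ h2⟩

lemma Str_lin {ρ : ℕ → Ω → ℝ≥0∞} {g h : ℕ → Ω → ℝ} (hg : Str M ρ g) (hh : Str M ρ h) (a b : ℝ) :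
    Str M ρ (fun n ω => a * g n ω + b * h n ω) where
  stpd := hg.stpd
  mono := hg.mono
  zero := hg.zero
  top := hg.top
  meas n t := by
    have : {ω | ρ n ω ≤ (t : ℝ≥0∞)}.indicator (fun ω => a * g n ω + b * h n ω) =
      fun ω => a * {ω | ρ n ω ≤ (t : ℝ≥0∞)}.indicator (g n) ω +
        b * {ω | ρ n ω ≤ (t : ℝ≥0∞)}.indicator (h n) ω := by
      ext ω; by_cases h1 : ρ n ω ≤ (t : ℝ≥0∞) <;> simp [indicator, h1]
    rw [this]
    exact ((hg.meas n t).const_mul a).add ((hh.meas n t).const_mul b)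
  g_top n ω hn := by simp [hg.g_top n ω hn, hh.g_top n ω hn]

lemma Str_mul {ρ : ℕ → Ω → ℝ≥0∞} {g h : ℕ → Ω → ℝ} (hg : Str M ρ g) (hh : Str M ρ h) :
    Str M ρ (fun n ω => g n ω * h n ω) where
  stpd := hg.stpd
  mono := hg.mono
  zero := hg.zero
  top := hg.top
  meas n t := by
    have : {ω | ρ n ω ≤ (t : ℝ≥0∞)}.indicator (fun ω => g n ω * h n ω) =
      fun ω => {ω | ρ n ω ≤ (t : ℝ≥0∞)}.indicator (g n) ω *
        {ω | ρ n ω ≤ (t : ℝ≥0∞)}.indicator (h n) ω := by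
      ext ω; by_cases h1 : ρ n ω ≤ (t : ℝ≥0∞) <;> simp [indicator, h1]
    rw [this]
    exact (hg.meas n t).mul (hh.meas n t)
  g_top n ω hn := by simp [hg.g_top n ω hn]

lemma Bd_lin {g h : ℕ → Ω → ℝ} (hg : Bd g) (hh : Bd h) (a b : ℝ) :
    Bd (fun n ω => a * g n ω + b * h n ω) := by
  intro n
  obtain ⟨C, hC⟩ := hg n
  obtain ⟨D, hD⟩ := hh n
  refine ⟨|a| * C + |b| * D, fun ω => (abs_add_le _ _).trans ?_⟩
  rw [abs_mul, abs_mul]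
  have := hC ω; have := hD ω
  gcongr

lemma Bd_mul {g h : ℕ → Ω → ℝ} (hg : Bd g) (hh : Bd h) : Bd (fun n ω => g n ω * h n ω) := by
  intro n
  obtain ⟨C, hC⟩ := hg n
  obtain ⟨D, hD⟩ := hh n
  refine ⟨C * D, fun ω => ?_⟩
  rw [abs_mul]
  exact mul_le_mul (hC ω) (hD ω) (abs_nonneg _) ((abs_nonneg _).trans (hC ω))

lemma Itg_lin {ρ : ℕ → Ω → ℝ≥0∞} {g h : ℕ → Ω → ℝ} (hg : Str M ρ g) (a b : ℝ)
    (X : ℝ≥0 → Ω → ℝ) (t : ℝ≥0) (ω : Ω) :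
    Itg ρ (fun n ω => a * g n ω + b * h n ω) X t ω = a * Itg ρ g X t ω + b * Itg ρ h X t ω := by
  obtain ⟨N, hN⟩ := hg.ex ω t
  rw [Itg_sum _ X hN, Itg_sum _ X hN, Itg_sum _ X hN, Finset.mul_sum, Finset.mul_sum,
    ← Finset.sum_add_distrib]
  exact Finset.sum_congr rfl fun _ _ => by ring

lemma Itg_X_lin {ρ : ℕ → Ω → ℝ≥0∞} {g : ℕ → Ω → ℝ} (hg : Str M ρ g) {ι : Type*} (s : Finset ι)
    (c : ℝ) (Xs : ι → ℝ≥0 → Ω → ℝ) (t : ℝ≥0) (ω : Ω) :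
    Itg ρ g (fun t ω => c + ∑ i ∈ s, Xs i t ω) t ω = ∑ i ∈ s, Itg ρ g (Xs i) t ω := by
  obtain ⟨N, hN⟩ := hg.ex ω t
  rw [Itg_sum _ _ hN]
  simp_rw [Itg_sum _ _ hN]
  rw [Finset.sum_comm]
  refine Finset.sum_congr rfl fun n _ => ?_
  rw [← Finset.mul_sum, Finset.sum_sub_distrib]
  ring

lemma Itg_at {ρ : ℕ → Ω → ℝ≥0∞} {h : ℕ → Ω → ℝ} (hh : Str M ρ h) (X : ℝ≥0 → Ω → ℝ) (t : ℝ≥0)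
    (ω : Ω) (n : ℕ) : Itg ρ h X (sm (ρ n ω) t) ω =
      ∑ k ∈ Finset.range n, h k ω * (X (sm (ρ (k + 1) ω) t) ω - X (sm (ρ k ω) t) ω) := by
  rw [Itg_sum h X (N := n)]
  · refine Finset.sum_congr rfl fun k hk => ?_
    rw [Finset.mem_range] at hk
    rw [sm_sm, sm_sm, min_eq_left (hh.mono ω (by omega : k + 1 ≤ n)),
      min_eq_left (hh.mono ω hk.le)]
  · intro k hk
    rw [coe_sm]
    exact (min_le_left _ _).trans (hh.mono ω hk)

lemma Itg_Itg {ρ : ℕ → Ω → ℝ≥0∞} {g h : ℕ → Ω → ℝ} (hg : Str M ρ g) (hh : Str M ρ h)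
    (X : ℝ≥0 → Ω → ℝ) (t : ℝ≥0) (ω : Ω) :
    Itg ρ g (Itg ρ h X) t ω = Itg ρ (fun n ω => g n ω * h n ω) X t ω := by
  obtain ⟨N, hN⟩ := hg.ex ω t
  rw [Itg_sum _ _ hN, Itg_sum _ _ hN]
  refine Finset.sum_congr rfl fun n _ => ?_
  rw [Itg_at hh, Itg_at hh, Finset.sum_range_succ]
  ring

/-- normal form of simple capital processes -/
def NF (M : MartingaleSpace Ω) (Y : ℝ≥0 → Ω → ℝ) : Prop :=
  ∃ (c : ℝ) (τ : Fin M.d → ℕ → Ω → ℝ≥0∞) (g : Fin M.d → ℕ → Ω → ℝ),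
    (∀ j, Str M (τ j) (g j)) ∧ (∀ j, Bd (g j)) ∧
    ∀ t ω, Y t ω = c + ∑ j, Itg (τ j) (g j) (M.S j) t ω

lemma NF_of {Y : ℝ≥0 → Ω → ℝ} (h : IsSimpleCapital M Y) : NF M Y := by
  obtain ⟨G, hG⟩ := h
  refine ⟨∑ j, (G j).c, fun j => nT (G j).τ.τ, fun j => nG (G j).τ.τ (G j).g, fun j =>
    Str_norm (G j).τ (fun n => MS_of ((G j).τ.stopping n) ((G j).g_meas n)) (G j).g_top,
    fun j => Bd_norm (G j).g_bdd, fun t ω => ?_⟩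
  rw [hG, ← Finset.sum_add_distrib]
  refine Finset.sum_congr rfl fun j _ => ?_
  rw [Itg_norm]; rfl

def mkS {τ : ℕ → Ω → ℝ≥0∞} {g : ℕ → Ω → ℝ} (c : ℝ) (h : Str M τ g) (hb : Bd g) :
    SimpleStrategy M where
  c := c
  τ := ⟨τ, h.stpd, h.mono, h.zero, fun ω => Or.inl (h.top ω)⟩
  g := g
  g_bdd := hb
  g_meas n := MS_to (h.stpd n) (h.meas n)
  g_top := h.g_top

lemma NF_to (hd : 0 < M.d) {Y : ℝ≥0 → Ω → ℝ} (h : NF M Y) : IsSimpleCapital M Y := by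
  obtain ⟨c, τ, g, hs, hb, hY⟩ := h
  refine ⟨fun j => mkS (if j = ⟨0, hd⟩ then c else 0) (hs j) (hb j), fun t ω => ?_⟩
  have : ∀ j, (mkS (if j = ⟨0, hd⟩ then c else 0) (hs j) (hb j)).integral (M.S j) t ω
    = (if j = ⟨0, hd⟩ then c else 0) + Itg (τ j) (g j) (M.S j) t ω := fun j => rfl
  simp_rw [this, Finset.sum_add_distrib]
  rw [hY]; simp

lemma SC_lin (hd : 0 < M.d) {Y Z : ℝ≥0 → Ω → ℝ} (hY : IsSimpleCapital M Y)
    (hZ : IsSimpleCapital M Z) (a b : ℝ) : IsSimpleCapital M fun t ω => a * Y t ω + b * Z t ω := by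
  obtain ⟨c, τ, g, hs, hb, hY⟩ := NF_of hY
  obtain ⟨c', τ', g', hs', hb', hZ⟩ := NF_of hZ
  choose ρ u v h1 h2 h3 h4 h5 h6 using fun j => merge (hs j) (hs' j) (hb j) (hb' j)
  refine NF_to hd ⟨a * c + b * c', ρ, _, fun j => Str_lin (h1 j) (h2 j) a b,
    fun j => Bd_lin (h3 j) (h4 j) a b, fun t ω => ?_⟩
  have : ∀ j, Itg (ρ j) (fun n ω => a * u j n ω + b * v j n ω) (M.S j) t ω
      = a * Itg (τ j) (g j) (M.S j) t ω + b * Itg (τ' j) (g' j) (M.S j) t ω := fun j => by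
    rw [Itg_lin (h1 j), h5, h6]
  simp_rw [this, Finset.sum_add_distrib, ← Finset.mul_sum]
  rw [hY, hZ]; ring

lemma Str_zero : Str M (fun n _ => (n : ℝ≥0∞)) (fun _ _ => 0) where
  stpd n := st_const _
  mono ω := fun a b h => by simpa using h
  zero ω := by simp
  top ω := ENNReal.tendsto_nat_nhds_top
  meas n t := by simp
  g_top n ω _ := rfl

lemma SC_const (hd : 0 < M.d) (c : ℝ) : IsSimpleCapital M fun _ _ => c :=
  NF_to hd ⟨c, fun _ => _, fun _ => _, fun _ => Str_zero, fun _ _ => ⟨0, fun _ => by simp⟩,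
    fun t ω => by simp [Itg]⟩

lemma SC_stop (hd : 0 < M.d) {Y : ℝ≥0 → Ω → ℝ} (hY : IsSimpleCapital M Y) {σ : Ω → ℝ≥0∞}
    (hσ : M.IsStoppingTime σ) : IsSimpleCapital M fun t ω => Y (sm (σ ω) t) ω := by
  obtain ⟨c, τ, g, hs, hb, hY⟩ := NF_of hY
  refine NF_to hd ⟨c, _, _, fun j => Str_stop (hs j) hσ, fun j => Bd_stop (hb j), fun t ω => ?_⟩
  simp_rw [fun j => Itg_stop (hs j) (σ := σ) (M.S j) t ω]
  rw [hY]

lemma SC_Itg (hd : 0 < M.d) {Y : ℝ≥0 → Ω → ℝ} (hY : IsSimpleCapital M Y)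
    {σ : ℕ → Ω → ℝ≥0∞} {h : ℕ → Ω → ℝ} (hh : Str M σ h) (bh : Bd h) :
    IsSimpleCapital M (Itg σ h Y) := by
  obtain ⟨c, τ, g, hs, hb, hY⟩ := NF_of hY
  choose ρ u v h1 h2 h3 h4 h5 h6 using fun j => merge (hs j) hh (hb j) bh
  refine NF_to hd ⟨0, ρ, _, fun j => Str_mul (h2 j) (h1 j),
    fun j => Bd_mul (h4 j) (h3 j), fun t ω => ?_⟩
  have e : Y = fun t ω => c + ∑ j, Itg (τ j) (g j) (M.S j) t ω := by ext t ω; exact hY t ω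
  rw [e, Itg_X_lin hh, zero_add]
  refine Finset.sum_congr rfl fun j _ => ?_
  have e2 : Itg (τ j) (g j) (M.S j) = Itg (ρ j) (u j) (M.S j) := by ext t ω; rw [h5]
  rw [e2, ← h6 j, Itg_Itg (h2 j) (h1 j)]

lemma C_nonneg {Z : ℝ≥0 → Ω → EReal} (hZ : IsNonnegSupermart M Z) (t : ℝ≥0) (ω : Ω) :
    0 ≤ Z t ω := by
  induction hZ with
  | simple X hX hpos => exact EReal.coe_nonneg.2 (hpos t ω)
  | add X Y hX hY hpos ih => exact hpos t ω
  | liminf Xs hXs ih => exact le_liminf_of_le (by isBoundedDefault) (Eventually.of_forall ih)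

lemma liminf_const_add' {a : EReal} (ha : 0 ≤ a) {u : ℕ → EReal} (hu : ∀ n, 0 ≤ u n) :
    a + liminf u atTop = liminf (fun n => a + u n) atTop := by
  have hl : 0 ≤ liminf u atTop := le_liminf_of_le (by isBoundedDefault) (Eventually.of_forall hu)
  have hm : Monotone fun x : EReal => a + x := fun x y h => add_le_add_right h a
  have hc : ContinuousAt (fun x : EReal => a + x) (liminf u atTop) := by
    have h1 := EReal.continuousAt_add (p := (a, liminf u atTop))
      (Or.inr (ne_of_gt (lt_of_lt_of_le EReal.bot_lt_zero hl)))
      (Or.inl (ne_of_gt (lt_of_lt_of_le EReal.bot_lt_zero ha)))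
    exact ContinuousAt.comp (f := fun x => (a, x)) (g := fun p : EReal × EReal => p.1 + p.2) h1
      (by fun_prop)
  exact hm.map_liminf_of_continuousAt u hc

lemma C_add {Z1 Z2 : ℝ≥0 → Ω → EReal} (h1 : IsNonnegSupermart M Z1) (h2 : IsNonnegSupermart M Z2) :
    IsNonnegSupermart M fun t ω => Z1 t ω + Z2 t ω := by
  induction h2 with
  | simple X hX hpos =>
    exact .add Z1 X h1 hX fun t ω => add_nonneg (C_nonneg h1 t ω) (by exact_mod_cast hpos t ω)
  | add X Y hX hY hpos ih =>
    have := IsNonnegSupermart.add _ Y ih hY (fun t ω => by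
      rw [add_assoc]; exact add_nonneg (C_nonneg h1 t ω) (hpos t ω))
    simpa only [add_assoc] using this
  | liminf Xs hXs ih =>
    have := IsNonnegSupermart.liminf _ ih
    convert this using 3 with t ω
    exact liminf_const_add' (C_nonneg h1 t ω) fun n => C_nonneg (hXs n) t ω

lemma C_smul (hd : 0 < M.d) {Z : ℝ≥0 → Ω → EReal} (h : IsNonnegSupermart M Z) {c : ℝ} (hc : 0 ≤ c) :
    IsNonnegSupermart M fun t ω => (c : EReal) * Z t ω := by
  have hc' : (0 : EReal) ≤ c := by exact_mod_cast hc
  induction h with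
  | simple X hX hpos =>
    have := IsNonnegSupermart.simple _ (SC_lin hd hX hX c 0) (fun t ω => by
      have := hpos t ω; positivity)
    simpa using this
  | add X Y hX hY hpos ih =>
    have e : ∀ t ω, (c : EReal) * (X t ω + (Y t ω : EReal)) =
        c * X t ω + ((c * Y t ω + 0 * Y t ω : ℝ) : EReal) := fun t ω => by
      rw [EReal.left_distrib_of_nonneg_of_ne_top hc' (EReal.coe_ne_top c)]
      simp
    simp_rw [e]
    refine IsNonnegSupermart.add _ _ ih (SC_lin hd hY hY c 0) fun t ω => ?_
    rw [← e]
    exact EReal.mul_nonneg hc' (hpos t ω)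
  | liminf Xs hXs ih =>
    have := IsNonnegSupermart.liminf _ ih
    convert this using 3 with t ω
    exact (EReal.liminf_const_mul_of_nonneg_of_ne_top hc' (EReal.coe_ne_top c)).symm

lemma C_stop (hd : 0 < M.d) {Z : ℝ≥0 → Ω → EReal} (h : IsNonnegSupermart M Z) {σ : Ω → ℝ≥0∞}
    (hσ : M.IsStoppingTime σ) : IsNonnegSupermart M fun t ω => Z (sm (σ ω) t) ω := by
  induction h with
  | simple X hX hpos => exact .simple _ (SC_stop hd hX hσ) fun t ω => hpos _ _
  | add X Y hX hY hpos ih => exact .add _ _ ih (SC_stop hd hY hσ) fun t ω => hpos _ _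
  | liminf Xs hXs ih => exact .liminf _ ih

lemma C_const (hd : 0 < M.d) {c : ℝ} (hc : 0 ≤ c) : IsNonnegSupermart M fun _ _ => (c : EReal) :=
  .simple _ (SC_const hd c) fun _ _ => hc

lemma C_sum (hd : 0 < M.d) {Z : ℕ → ℝ≥0 → Ω → EReal} (h : ∀ n, IsNonnegSupermart M (Z n)) (n : ℕ) :
    IsNonnegSupermart M fun t ω => ∑ k ∈ Finset.range n, Z k t ω := by
  induction n with
  | zero => simpa using C_const hd le_rfl
  | succ n ih => simp_rw [Finset.sum_range_succ]; exact C_add ih (h n)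

lemma Enf_mono {E E' : Set (ℝ≥0 × Ω)} (h : InstantlyEnforceable M E) (hs : E ⊆ E') :
    InstantlyEnforceable M E' := by
  obtain ⟨V, h1, h2, h3⟩ := h
  exact ⟨V, h1, h2, fun t ω ht => h3 t ω fun h => ht (hs h)⟩

lemma Enf_univ (hd : 0 < M.d) : InstantlyEnforceable M univ :=
  ⟨_, C_const hd zero_le_one, fun _ => by simp, fun t ω h => absurd trivial h⟩

lemma Enf_iInter (hd : 0 < M.d) {E : ℕ → Set (ℝ≥0 × Ω)} (h : ∀ n, InstantlyEnforceable M (E n)) :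
    InstantlyEnforceable M (⋂ n, E n) := by
  choose V h1 h2 h3 using h
  refine ⟨_, IsNonnegSupermart.liminf (fun n t ω =>
    (((1 / 2 : ℝ) ^ n : ℝ) : EReal) + ∑ k ∈ Finset.range n, (((1 / 2 : ℝ) ^ (k + 1) : ℝ) : EReal) * V k t ω)
    (fun n => C_add (C_const hd (by positivity))
      (C_sum hd (fun k => C_smul hd (h1 k) (by positivity)) n)), fun ω => ?_, fun t ω ht => ?_⟩
  · have : ∀ n : ℕ, (((1 / 2 : ℝ) ^ n : ℝ) : EReal) +
        ∑ k ∈ Finset.range n, (((1 / 2 : ℝ) ^ (k + 1) : ℝ) : EReal) * V k 0 ω = 1 := by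
      intro n
      simp only [h2, mul_one]
      rw [← EReal.coe_one]
      induction n with
      | zero => simp
      | succ n ih =>
        rw [← ih, Finset.sum_range_succ, add_comm (∑ _ ∈ _, _), ← add_assoc, ← EReal.coe_add]
        congr 2; ring
    simp only [this]
    exact liminf_const _
  · simp only [mem_iInter, not_forall] at ht
    obtain ⟨k, hk⟩ := ht
    refine (tendsto_nhds_of_eventually_eq ?_).liminf_eq
    filter_upwards [eventually_gt_atTop k] with n hn
    rw [← top_le_iff]
    have hnn : ∀ k, 0 ≤ (((1 / 2 : ℝ) ^ (k + 1) : ℝ) : EReal) * V k t ω := fun k =>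
      EReal.mul_nonneg (by exact_mod_cast (by positivity : (0:ℝ) ≤ (1/2)^(k+1))) (C_nonneg (h1 k) t ω)
    have e : (((1 / 2 : ℝ) ^ (k + 1) : ℝ) : EReal) * V k t ω = ⊤ := by
      rw [h3 k t ω hk, EReal.coe_mul_top_of_pos (by positivity)]
    calc ⊤ = (((1 / 2 : ℝ) ^ (k + 1) : ℝ) : EReal) * V k t ω := e.symm
      _ ≤ ∑ k ∈ Finset.range n, (((1 / 2 : ℝ) ^ (k + 1) : ℝ) : EReal) * V k t ω :=
        Finset.single_le_sum (f := fun k => (((1 / 2 : ℝ) ^ (k + 1) : ℝ) : EReal) * V k t ω)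
          (fun i _ => hnn i) (Finset.mem_range.2 hn)
      _ ≤ _ := le_add_of_nonneg_left (by exact_mod_cast (by positivity : (0:ℝ) ≤ (1/2)^n))

lemma Enf_inter (hd : 0 < M.d) {E E' : Set (ℝ≥0 × Ω)} (h : InstantlyEnforceable M E)
    (h' : InstantlyEnforceable M E') : InstantlyEnforceable M (E ∩ E') := by
  refine Enf_mono (Enf_iInter hd (E := fun n => if n = 0 then E else E') fun n => ?_) ?_
  · by_cases hn : n = 0 <;> simp [hn, h, h']
  · intro p hp
    simp only [mem_iInter] at hp
    exact ⟨by simpa using hp 0, by simpa using hp 1⟩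

def hull (E : Set (ℝ≥0 × Ω)) : Set (ℝ≥0 × Ω) := {p | ∀ s ≤ p.1, (s, p.2) ∈ E}

lemma hull_sub (E : Set (ℝ≥0 × Ω)) : hull E ⊆ E := fun p hp => hp p.1 le_rfl

def DC (E : Set (ℝ≥0 × Ω)) : Prop := ∀ t ω, (t, ω) ∈ E → ∀ s ≤ t, (s, ω) ∈ E

lemma DC_hull (E : Set (ℝ≥0 × Ω)) : DC (hull E) := fun _ _ h _ hs r hr => h r (hr.trans hs)

lemma DC_inter {E E' : Set (ℝ≥0 × Ω)} (h : DC E) (h' : DC E') : DC (E ∩ E') :=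
  fun t ω ht s hs => ⟨h t ω ht.1 s hs, h' t ω ht.2 s hs⟩

open Classical in
lemma Enf_hull (hd : 0 < M.d) (hA : AssumptionA M) {E : Set (ℝ≥0 × Ω)}
    (h : InstantlyEnforceable M E) : InstantlyEnforceable M (hull E) := by
  let D := TopologicalSpace.denseSeq ℝ≥0
  let S : ℕ → Ω → ℝ≥0∞ := fun n ω =>
    if h : ∃ s ≤ D n, (s, ω) ∉ E then ((Classical.choose h : ℝ≥0) : ℝ≥0∞) else ⊤
  have hS1 : ∀ n ω s, S n ω = ((s : ℝ≥0) : ℝ≥0∞) → s ≤ D n ∧ (s, ω) ∉ E := by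
    intro n ω s hs
    by_cases h : ∃ s ≤ D n, (s, ω) ∉ E
    · simp only [S, dif_pos h] at hs
      have := Classical.choose_spec h
      rw [ENNReal.coe_inj] at hs
      rwa [hs] at this
    · simp only [S, dif_neg h] at hs
      exact absurd hs.symm ENNReal.coe_ne_top
  have hS2 : ∀ n ω s, s ≤ D n → (s, ω) ∉ E → ∃ r : ℝ≥0, S n ω = r := by
    intro n ω s hs hE
    have h : ∃ s ≤ D n, (s, ω) ∉ E := ⟨s, hs, hE⟩
    exact ⟨Classical.choose h, by simp only [S, dif_pos h]⟩
  have hst : ∀ n, M.IsStoppingTime (S n) := by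
    intro n t
    have hb : InstantlyBlockable M {p : ℝ≥0 × Ω | S n p.2 = (p.1 : ℝ≥0∞)} := by
      refine Enf_mono h fun p hp hp' => (hS1 n p.2 p.1 hp').2 hp
    convert hA t _ hb using 1
    ext ω
    simp only [mem_ofPred_eq]
    constructor
    · intro hle
      lift S n ω to ℝ≥0 using ne_top_of_le_ne_top ENNReal.coe_ne_top hle with r hr
      exact ⟨r, by exact_mod_cast hle, rfl⟩
    · rintro ⟨s, hs, he⟩
      rw [he]; exact_mod_cast hs
  obtain ⟨V, h1, h2, h3⟩ := h
  have hn : ∀ n, InstantlyEnforceable M {p : ℝ≥0 × Ω | ¬ (S n p.2 ≤ (p.1 : ℝ≥0∞))} := fun n =>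
    ⟨_, C_stop hd h1 (hst n), fun ω => by rw [sm_at_zero]; exact h2 ω, fun t ω ht => by
      simp only [mem_ofPred_eq, not_not] at ht
      have hr : ∃ r : ℝ≥0, S n ω = r := ⟨(S n ω).toNNReal,
        (ENNReal.coe_toNNReal (ne_top_of_le_ne_top ENNReal.coe_ne_top ht)).symm⟩
      obtain ⟨r, hr⟩ := hr
      rw [hr, sm_coe, min_eq_left (by rw [hr] at ht; exact_mod_cast ht)]
      exact h3 _ _ (hS1 n ω r hr).2⟩
  refine Enf_mono (Enf_inter hd ⟨V, h1, h2, h3⟩ (Enf_iInter hd hn)) ?_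
  rintro ⟨t, ω⟩ ⟨hp1, hp2⟩ s hs
  by_contra hE
  rcases hs.lt_or_eq with hs | hs
  · obtain ⟨n, hn⟩ := (TopologicalSpace.denseRange_denseSeq ℝ≥0).exists_mem_open isOpen_Ioo
      (nonempty_Ioo.2 hs)
    obtain ⟨r, hr⟩ := hS2 n ω s hn.1.le hE
    simp only [mem_iInter, mem_ofPred_eq] at hp2
    refine hp2 n ?_
    rw [hr]
    exact_mod_cast (hS1 n ω r hr).1.trans hn.2.le
  · subst hs; exact hE hp1

lemma meas_null (hA : AssumptionA M) {E : Set (ℝ≥0 × Ω)} (h : InstantlyEnforceable M E) {t : ℝ≥0}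
    {N : Set Ω} (hN : ∀ ω ∈ N, (t, ω) ∉ E) : MeasurableSet[M.F t] N := by
  have hb : InstantlyBlockable M {p : ℝ≥0 × Ω | p.1 = t ∧ p.2 ∈ N} := by
    refine Enf_mono h fun p hp hp' => ?_
    obtain ⟨s, ω⟩ := p
    obtain ⟨rfl, h2⟩ := hp'
    exact hN ω h2 hp
  convert hA t _ hb using 1
  ext ω
  simp only [mem_ofPred_eq]
  exact ⟨fun h => ⟨t, le_rfl, rfl, h⟩, fun ⟨s, _, _, h⟩ => h⟩

lemma meas_congr_set (hA : AssumptionA M) {E : Set (ℝ≥0 × Ω)} (h : InstantlyEnforceable M E)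
    {t : ℝ≥0} {A B : Set Ω} (hB : MeasurableSet[M.F t] B)
    (hAB : ∀ ω, (t, ω) ∈ E → (ω ∈ A ↔ ω ∈ B)) : MeasurableSet[M.F t] A := by
  have e : A = (B \ (B \ A)) ∪ (A \ B) := by
    ext ω
    by_cases h1 : ω ∈ A <;> by_cases h2 : ω ∈ B <;> simp [h1, h2]
  rw [e]
  refine MeasurableSet.union (MeasurableSet.diff hB ?_) ?_
  · exact meas_null hA h fun ω hω hE => hω.2 ((hAB ω hE).2 hω.1)
  · exact meas_null hA h fun ω hω hE => hω.2 ((hAB ω hE).1 hω.1)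

lemma meas_congr (hA : AssumptionA M) {E : Set (ℝ≥0 × Ω)} (h : InstantlyEnforceable M E)
    {t : ℝ≥0} {f g : Ω → ℝ} (hg : Measurable[M.F t] g)
    (hfg : ∀ ω, (t, ω) ∈ E → f ω = g ω) : Measurable[M.F t] f := by
  intro B hB
  refine meas_congr_set hA h (hg hB) fun ω hω => ?_
  simp only [mem_preimage, hfg ω hω]

lemma meas_lim (hA : AssumptionA M) {E : Set (ℝ≥0 × Ω)} (h : InstantlyEnforceable M E)
    {t : ℝ≥0} {f : ℕ → Ω → ℝ} {g : Ω → ℝ} (hf : ∀ n, Measurable[M.F t] (f n))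
    (hfg : ∀ ω, (t, ω) ∈ E → Tendsto (fun n => f n ω) atTop (𝓝 (g ω))) : Measurable[M.F t] g := by
  classical
  have hE : MeasurableSet[M.F t] {ω | (t, ω) ∈ E} :=
    meas_congr_set hA h MeasurableSet.univ (fun ω hω => by simp [hω])
  have : Measurable[M.F t] ({ω | (t, ω) ∈ E}.indicator g) := by
    let := M.F t
    refine measurable_of_tendsto_metrizable (f := fun n => {ω | (t, ω) ∈ E}.indicator (f n))
      (fun n => (hf n).indicator hE) ?_
    rw [tendsto_pi_nhds]
    intro ω
    by_cases hω : (t, ω) ∈ E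
    · simpa [indicator, hω] using hfg ω hω
    · simp [indicator, hω]
  refine meas_congr hA h this fun ω hω => ?_
  simp [indicator, hω]

lemma meas_sm {σ : Ω → ℝ≥0∞} (hσ : M.IsStoppingTime σ) (t : ℝ≥0) :
    Measurable[M.F t] fun ω => sm (σ ω) t := by
  let := M.F t
  refine measurable_of_Iic fun u => ?_
  have : (fun ω => sm (σ ω) t) ⁻¹' Iic u = {ω | σ ω ≤ u} ∪ {ω | t ≤ u} := by
    ext ω
    simp only [mem_preimage, mem_Iic, mem_union, mem_ofPred_eq]
    rw [← ENNReal.coe_le_coe, coe_sm, min_le_iff, ENNReal.coe_le_coe]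
  rw [this]
  by_cases hu : t ≤ u
  · simp [hu]
  · simp only [hu]
    simpa using st_mono hσ (not_le.1 hu).le

lemma meas_count {m : MeasurableSpace Ω} {h : ℕ → Ω → ℝ} (hh : ∀ k, Measurable (h k))
    {κ : Ω → ℕ} (hκ : Measurable κ) : Measurable fun ω => h (κ ω) ω := by
  have h1 : Measurable fun p : ℕ × Ω => h p.1 p.2 :=
    measurable_from_prod_countable_right fun k => hh k
  exact h1.comp (hκ.prodMk measurable_id)

lemma nnfloor (x : ℝ≥0) : ⌊(x : ℝ)⌋₊ = ⌊x⌋₊ := by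
  rw [Nat.floor_eq_iff x.coe_nonneg]
  exact ⟨by exact_mod_cast Nat.floor_le (zero_le : 0 ≤ x), by exact_mod_cast Nat.lt_floor_add_one x⟩

lemma meas_stopped (hA : AssumptionA M) {E : Set (ℝ≥0 × Ω)} (h : InstantlyEnforceable M E)
    {U : ℝ≥0 → Ω → ℝ} (hU : ∀ t, Measurable[M.F t] (U t))
    (hc : ∀ t ω, (t, ω) ∈ E → ContinuousOn (fun s => U s ω) (Icc 0 t))
    {σ : Ω → ℝ≥0∞} (hσ : M.IsStoppingTime σ) (t : ℝ≥0) :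
    Measurable[M.F t] fun ω => U (sm (σ ω) t) ω := by
  refine meas_lim hA h (f := fun n ω =>
    U (min ((⌊((n : ℝ≥0) + 1) * sm (σ ω) t⌋₊ : ℝ≥0) / ((n : ℝ≥0) + 1)) t) ω) (fun n => ?_) ?_
  · have h2 : Measurable[M.F t] fun ω => ⌊((n : ℝ≥0) + 1) * sm (σ ω) t⌋₊ :=
      Nat.measurable_floor.comp ((meas_sm hσ t).const_mul _)
    exact meas_count (m := M.F t) (h := fun (k : ℕ) => U (min ((k : ℝ≥0) / ((n : ℝ≥0) + 1)) t))
      (fun k => (hU _).mono (M.mono (min_le_right _ _)) le_rfl) h2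
  · intro ω hω
    have hcc := hc t ω hω (sm (σ ω) t) ⟨zero_le, sm_le _ _⟩
    refine hcc.tendsto.comp (tendsto_nhdsWithin_iff.2 ⟨?_, ?_⟩)
    · have h1 : Tendsto (fun n : ℕ => (⌊((n : ℝ≥0) + 1) * sm (σ ω) t⌋₊ : ℝ≥0) / ((n : ℝ≥0) + 1))
          atTop (𝓝 (sm (σ ω) t)) := by
        have h2 := tendsto_nat_floor_mul_div_atTop (R := ℝ) (a := (sm (σ ω) t : ℝ)) NNReal.zero_le_coe
        have h3 : Tendsto (fun n : ℕ => (n : ℝ) + 1) atTop atTop :=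
          tendsto_atTop_add_const_right _ _ tendsto_natCast_atTop_atTop
        have h4 := h2.comp h3
        rw [← NNReal.tendsto_coe]
        refine h4.congr fun n => ?_
        simp only [Function.comp]
        push_cast
        congr 2
        rw [mul_comm]
        have := nnfloor (((n : ℝ≥0) + 1) * sm (σ ω) t)
        push_cast at this
        rw [this]
      have h5 := h1.min (tendsto_const_nhds (x := t))
      rwa [min_eq_left (sm_le _ _)] at h5
    · exact Eventually.of_forall fun n => ⟨zero_le, min_le_right _ _⟩

lemma cont_sm (a : ℝ≥0∞) : Continuous (sm a) := by
  induction a with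
  | top => 
    have : sm ⊤ = id := by ext t; simp [sm]
    rw [this]; exact continuous_id
  | coe a =>
    have : sm (a : ℝ≥0∞) = fun t => min a t := by ext t; rw [sm_coe]
    rw [this]; fun_prop

lemma Itg_cont {τ : ℕ → Ω → ℝ≥0∞} {g : ℕ → Ω → ℝ} (h : Str M τ g) {U : ℝ≥0 → Ω → ℝ} {t : ℝ≥0} {ω : Ω}
    (hc : ContinuousOn (fun s => U s ω) (Icc 0 t)) :
    ContinuousOn (fun s => Itg τ g U s ω) (Icc 0 t) := by
  obtain ⟨N, hN⟩ := h.ex ω t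
  have e : ∀ s ∈ Icc 0 t, Itg τ g U s ω = ∑ n ∈ Finset.range N,
      g n ω * (U (sm (τ (n + 1) ω) s) ω - U (sm (τ n ω) s) ω) := fun s hs =>
    Itg_sum g U fun n hn => le_trans (by exact_mod_cast hs.2) (hN n hn)
  refine ContinuousOn.congr ?_ e
  have h1 : ∀ n, ContinuousOn (fun s => U (sm (τ n ω) s) ω) (Icc 0 t) := fun n =>
    hc.comp (cont_sm _).continuousOn fun s hs => ⟨zero_le, (sm_le _ _).trans hs.2⟩
  exact continuousOn_finsetSum _ fun n _ => ((h1 (n + 1)).sub (h1 n)).const_smul (g n ω)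

lemma Itg_meas (hA : AssumptionA M) {E : Set (ℝ≥0 × Ω)} (hE : InstantlyEnforceable M E)
    {τ : ℕ → Ω → ℝ≥0∞} {g : ℕ → Ω → ℝ} (h : Str M τ g) {U : ℝ≥0 → Ω → ℝ}
    (hU : ∀ t, Measurable[M.F t] (U t))
    (hc : ∀ t ω, (t, ω) ∈ E → ContinuousOn (fun s => U s ω) (Icc 0 t)) (t : ℝ≥0) :
    Measurable[M.F t] (Itg τ g U t) := by
  refine meas_lim hA hE (f := fun N ω => ∑ n ∈ Finset.range N,
    ({ω | τ n ω ≤ (t : ℝ≥0∞)}.indicator (g n) ω) * (U (sm (τ (n + 1) ω) t) ω - U (sm (τ n ω) t) ω))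
    (fun N => ?_) fun ω _ => ?_
  · let := M.F t
    refine Finset.measurable_fun_sum _ fun n _ => ?_
    exact (h.meas n t).mul ((meas_stopped hA hE hU hc (h.stpd (n + 1)) t).sub
      (meas_stopped hA hE hU hc (h.stpd n) t))
  · obtain ⟨N, hN⟩ := h.ex ω t
    refine tendsto_nhds_of_eventually_eq ?_
    filter_upwards [eventually_ge_atTop N] with N' hN'
    rw [Itg_sum g U fun n hn => hN n (hN'.trans hn)]
    refine Finset.sum_congr rfl fun n _ => ?_
    by_cases hn : τ n ω ≤ (t : ℝ≥0∞)
    · simp [indicator, hn]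
    · rw [sm_of_le (not_le.1 hn).le, sm_of_le ((not_le.1 hn).le.trans (h.mono ω n.le_succ))]
      simp

def hit (E : Set (ℝ≥0 × Ω)) (U : ℝ≥0 → Ω → ℝ) (ε : ℝ) (ω : Ω) : ℝ≥0∞ :=
  ⨅ s ∈ {s : ℝ≥0 | (s, ω) ∈ E ∧ ε ≤ |U s ω|}, (s : ℝ≥0∞)

lemma hit_st (hA : AssumptionA M) {E : Set (ℝ≥0 × Ω)} (hE : InstantlyEnforceable M E) (hdc : DC E)
    {U : ℝ≥0 → Ω → ℝ} (hU : ∀ t, Measurable[M.F t] (U t))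
    (hc : ∀ t ω, (t, ω) ∈ E → ContinuousOn (fun s => U s ω) (Icc 0 t)) (ε : ℝ) :
    M.IsStoppingTime (hit E U ε) := by
  intro t
  let D := TopologicalSpace.denseSeq ℝ≥0
  refine meas_congr_set hA hE
    (B := ⋂ m : ℕ, ⋃ n : ℕ, {ω | ε - 1 / ((m : ℝ) + 1) < |U (min (D n) t) ω|}) ?_ fun ω hω => ?_
  · refine MeasurableSet.iInter fun m => MeasurableSet.iUnion fun n => ?_
    let := M.F t
    have h1 : Measurable (U (min (D n) t)) :=
      (hU _).mono (M.mono (min_le_right _ _)) le_rfl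
    exact measurableSet_lt measurable_const h1.abs
  · have hcu : Continuous fun r : ℝ≥0 => |U (min r t) ω| := by
      have := (hc t ω hω).comp_continuous (f := fun r : ℝ≥0 => min r t) (by fun_prop)
        (fun r => ⟨zero_le, min_le_right _ _⟩)
      exact this.abs
    simp only [mem_ofPred_eq, mem_iInter, mem_iUnion]
    constructor
    · intro hle
      have key : ∃ s ≤ t, ε ≤ |U s ω| := by
        by_contra hcon
        push Not at hcon
        have hgt : ∀ s : ℝ≥0, (s, ω) ∈ E → ε ≤ |U s ω| → t < s := fun s _ h2 => by
          by_contra h3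
          exact absurd h2 (not_le.2 (hcon s (not_lt.1 h3)))
        have hne : ∃ s : ℝ≥0, (s, ω) ∈ E ∧ ε ≤ |U s ω| := by
          by_contra hno
          push Not at hno
          have : hit E U ε ω = ⊤ := by
            simp only [hit, iInf_eq_top, mem_ofPred_eq]
            intro s hs
            exact absurd hs.2 (not_le.2 (hno s hs.1))
          rw [this] at hle
          exact absurd hle (by simp)
        obtain ⟨s1, hs1, hs1'⟩ := hne
        have hts := hgt s1 hs1 hs1'
        have hcs := (hc s1 ω hs1 t ⟨zero_le, hts.le⟩).abs
        have hev := hcs.eventually (gt_mem_nhds (hcon t le_rfl))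
        rw [eventually_nhdsWithin_iff] at hev
        obtain ⟨b, hb, hbs⟩ := (mem_nhdsGE_iff_exists_Ico_subset' hts).1
          (mem_nhdsWithin_of_mem_nhds hev)
        have : ((min b s1 : ℝ≥0) : ℝ≥0∞) ≤ hit E U ε ω := by
          refine le_iInf₂ fun s hs => ?_
          by_contra hlt
          rw [not_le, ENNReal.coe_lt_coe] at hlt
          have h4 := hgt s hs.1 hs.2
          have h5 := hbs ⟨h4.le, hlt.trans_le (min_le_left _ _)⟩ ⟨zero_le, (hlt.trans_le (min_le_right _ _)).le⟩
          exact absurd hs.2 (not_le.2 h5)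
        have h6 := this.trans hle
        rw [ENNReal.coe_le_coe] at h6
        exact absurd h6 (not_le.2 (lt_min hb hts))
      obtain ⟨s, hs, hs'⟩ := key
      intro m
      obtain ⟨n, hn⟩ := (TopologicalSpace.denseRange_denseSeq ℝ≥0).exists_mem_open
        (isOpen_lt (continuous_const (y := ε - 1 / ((m : ℝ) + 1))) hcu) ⟨s, by
          simp only [mem_ofPred_eq, min_eq_left hs]
          have : (0 : ℝ) < 1 / ((m : ℝ) + 1) := by positivity
          linarith⟩
      exact ⟨n, hn⟩
    · intro hall
      obtain ⟨s, hs, hmax⟩ := (isCompact_Icc (a := (0 : ℝ≥0)) (b := t)).exists_isMaxOn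
        ⟨0, le_rfl, zero_le⟩ hcu.continuousOn
      have : ε ≤ |U s ω| := by
        by_contra hlt
        rw [not_le] at hlt
        obtain ⟨m, hm⟩ := exists_nat_one_div_lt (sub_pos.2 hlt)
        obtain ⟨n, hn⟩ := hall m
        have h7 := hmax (a := min (D n) t) ⟨zero_le, min_le_right _ _⟩
        simp only [mem_ofPred_eq, min_eq_left hs.2, min_assoc, min_self] at h7
        linarith
      exact (iInf₂_le (f := fun s (_ : s ∈ {s : ℝ≥0 | (s, ω) ∈ E ∧ ε ≤ |U s ω|}) => (s : ℝ≥0∞)) s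
        ⟨hdc t ω hω s hs.2, this⟩).trans (by exact_mod_cast hs.2)

lemma hit_bd {E : Set (ℝ≥0 × Ω)} (hdc : DC E) {U : ℝ≥0 → Ω → ℝ}
    (hc : ∀ t ω, (t, ω) ∈ E → ContinuousOn (fun s => U s ω) (Icc 0 t)) {ε : ℝ} {t : ℝ≥0} {ω : Ω}
    (hω : (t, ω) ∈ E) (h0 : |U 0 ω| ≤ ε) : |U (sm (hit E U ε ω) t) ω| ≤ ε := by
  set v := sm (hit E U ε ω) t with hv
  have hvt : v ≤ t := sm_le _ _
  rcases eq_zero_or_pos v with h | h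
  · rw [h]; exact h0
  by_contra hlt
  rw [not_le] at hlt
  have hcs := (hc t ω hω v ⟨zero_le, hvt⟩).abs
  have hev := hcs.eventually (lt_mem_nhds hlt)
  have hev' : ∀ᶠ s in 𝓝[<] v, ε < |U s ω| := by
    refine hev.filter_mono ?_
    have : 𝓝[Icc 0 t ∩ Iio v] v = 𝓝[<] v := by
      congr 1
      ext s; simp only [mem_inter_iff, mem_Icc, mem_Iio]
      exact ⟨fun h => h.2, fun h => ⟨⟨zero_le, h.le.trans hvt⟩, h⟩⟩
    rw [← this]
    exact nhdsWithin_mono _ inter_subset_left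
  have : (𝓝[<] v).NeBot := nhdsLT_neBot_of_exists_lt ⟨0, h⟩
  obtain ⟨s, hs1, hs2⟩ := (hev'.and self_mem_nhdsWithin).exists
  have h8 : hit E U ε ω ≤ s := iInf₂_le (f := fun s (_ : s ∈ {s : ℝ≥0 | (s, ω) ∈ E ∧ ε ≤ |U s ω|}) =>
    (s : ℝ≥0∞)) s ⟨hdc t ω hω s (hs2.le.trans hvt), hs1.le⟩
  have h9 : v ≤ s := by
    rw [← ENNReal.coe_le_coe, hv, coe_sm]
    exact (min_le_left _ _).trans h8
  exact absurd hs2 (not_lt.2 h9)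

lemma hit_ge {E : Set (ℝ≥0 × Ω)} {U : ℝ≥0 → Ω → ℝ} {ε : ℝ} {t : ℝ≥0} {ω : Ω}
    (h : ∀ s ≤ t, |U s ω| < ε) : (t : ℝ≥0∞) ≤ hit E U ε ω := by
  refine le_iInf₂ fun s hs => ?_
  by_contra hlt
  rw [not_le, ENNReal.coe_lt_coe] at hlt
  exact absurd hs.2 (not_le.2 (h s hlt.le))

lemma SC_cont {Y : ℝ≥0 → Ω → ℝ} (hY : IsSimpleCapital M Y) (t : ℝ≥0) (ω : Ω) :
    ContinuousOn (fun s => Y s ω) (Icc 0 t) := by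
  obtain ⟨c, τ, g, hs, hb, hY⟩ := NF_of hY
  simp_rw [hY]
  exact continuousOn_const.add (continuousOn_finsetSum _ fun j _ =>
    Itg_cont (hs j) (M.S_cont j ω).continuousOn)

lemma SC_meas (hd : 0 < M.d) (hA : AssumptionA M) {Y : ℝ≥0 → Ω → ℝ} (hY : IsSimpleCapital M Y)
    (t : ℝ≥0) : Measurable[M.F t] (Y t) := by
  obtain ⟨c, τ, g, hs, hb, hY⟩ := NF_of hY
  have : Y t = fun ω => c + ∑ j, Itg (τ j) (g j) (M.S j) t ω := funext fun ω => hY t ω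
  rw [this]
  let := M.F t
  refine measurable_const.add (Finset.measurable_fun_sum _ fun j _ => ?_)
  exact Itg_meas hA (Enf_univ hd) (hs j) (M.S_adapted j) (fun t ω _ => (M.S_cont j ω).continuousOn) t

lemma conv_real {Xn : ℕ → ℝ≥0 → Ω → EReal} {X : ℝ≥0 → Ω → EReal} {t : ℝ≥0} {ω : Ω}
    (h1 : ∀ s ≤ t, ∃ r : ℝ, X s ω = r) (h2 : ∀ n, ∀ s ≤ t, ∃ r : ℝ, Xn n s ω = r)
    (h : (t, ω) ∈ unifConvSet Xn X) {ε : ℝ} (hε : 0 < ε) :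
    ∀ᶠ n in atTop, ∀ s ≤ t, |(Xn n s ω).toReal - (X s ω).toReal| < ε := by
  have h' : Tendsto (fun n => ⨆ s ∈ Icc (0 : ℝ≥0) t, (X s ω - Xn n s ω).abs) atTop (𝓝 0) := h
  have hev := h'.eventually (gt_mem_nhds (ENNReal.ofReal_pos.2 hε))
  filter_upwards [hev] with n hn s hs
  obtain ⟨a, ha⟩ := h1 s hs
  obtain ⟨b, hb⟩ := h2 n s hs
  have h3 : (X s ω - Xn n s ω).abs ≤ ⨆ s ∈ Icc (0 : ℝ≥0) t, (X s ω - Xn n s ω).abs :=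
    le_iSup₂ (f := fun s (_ : s ∈ Icc (0 : ℝ≥0) t) => (X s ω - Xn n s ω).abs) s ⟨zero_le, hs⟩
  have h4 := h3.trans_lt hn
  rw [ha, hb, ← EReal.coe_sub, EReal.abs_def, ENNReal.ofReal_lt_ofReal_iff hε] at h4
  rw [ha, hb, EReal.toReal_coe, EReal.toReal_coe, abs_sub_comm]
  exact h4

lemma DC_unif (Xn : ℕ → ℝ≥0 → Ω → EReal) (X : ℝ≥0 → Ω → EReal) : DC (unifConvSet Xn X) := by
  intro t ω h s hs
  refine tendsto_of_tendsto_of_tendsto_of_le_of_le tendsto_const_nhds h (fun _ => zero_le) fun n => ?_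
  exact biSup_mono fun r hr => ⟨hr.1, hr.2.trans hs⟩

def Good (M : MartingaleSpace Ω) (Y : ℝ≥0 → Ω → EReal) (E : Set (ℝ≥0 × Ω)) : Prop :=
  InstantlyEnforceable M E ∧ DC E ∧ ∀ t ω, (t, ω) ∈ E → (∃ r : ℝ, Y t ω = r) ∧
    ContinuousOn (fun s => (Y s ω).toReal) (Icc 0 t)

lemma mart_meas (hd : 0 < M.d) (hA : AssumptionA M) {Y : ℝ≥0 → Ω → EReal} (hY : IsMartingale M Y)
    (t : ℝ≥0) : Measurable[M.F t] fun ω => (Y t ω).toReal := by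
  cases hY with
  | simple X hX => exact SC_meas hd hA hX t
  | lim Xn X hXn hadapted hreal hconv =>
    let := M.F t
    exact (hadapted t).ereal_toReal

lemma mart_good (hd : 0 < M.d) (hA : AssumptionA M) {Y : ℝ≥0 → Ω → EReal} (hY : IsMartingale M Y) :
    ∃ E, Good M Y E := by
  induction hY with
  | simple X hX =>
    refine ⟨univ, Enf_univ hd, fun _ _ _ _ _ => trivial, fun t ω _ => ⟨⟨_, rfl⟩, ?_⟩⟩
    exact SC_cont hX t ω
  | lim Xn Y hXn hadapted hreal hconv ih =>
    choose E hE using ih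
    refine ⟨(⋂ n, E n) ∩ (hull {p : ℝ≥0 × Ω | ∃ r : ℝ, Y p.1 p.2 = (r : EReal)} ∩ unifConvSet Xn Y),
      Enf_inter hd (Enf_iInter hd fun n => (hE n).1) (Enf_inter hd (Enf_hull hd hA hreal) hconv),
      DC_inter ?_ (DC_inter (DC_hull _) (DC_unif _ _)), ?_⟩
    · intro t ω h s hs
      rw [mem_iInter] at h ⊢
      exact fun n => (hE n).2.1 t ω (h n) s hs
    · rintro t ω ⟨h1, h2, h3⟩
      rw [mem_iInter] at h1
      refine ⟨h2 t le_rfl, ?_⟩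
      have hu : TendstoUniformlyOn (fun n s => (Xn n s ω).toReal) (fun s => (Y s ω).toReal) atTop
          (Icc 0 t) := by
        rw [Metric.tendstoUniformlyOn_iff]
        intro ε hε
        filter_upwards [conv_real (fun s hs => h2 s hs)
          (fun n s hs => ((hE n).2.2 s ω ((hE n).2.1 t ω (h1 n) s hs)).1) h3 hε] with n hn s hs
        rw [dist_comm, Real.dist_eq]
        exact hn s hs.2
      exact hu.continuousOn (Frequently.of_forall fun n => ((hE n).2.2 t ω (h1 n)).2)

lemma M1 (hd : 0 < M.d) (hA : AssumptionA M) {Y : ℝ≥0 → Ω → EReal} (hY : IsMartingale M Y) :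
    ∀ τ g, Str M τ g → Bd g → ∀ Z, IsNonnegSupermart M Z → ∀ E, InstantlyEnforceable M E →
      (∀ t ω, (t, ω) ∈ E → 0 ≤ Z t ω + ((Itg τ g (fun t ω => (Y t ω).toReal) t ω : ℝ) : EReal)) →
      ∀ ε : ℝ, 0 < ε → ∃ W, IsNonnegSupermart M W ∧ (∀ ω, W 0 ω = Z 0 ω + (ε : EReal)) ∧
        ∀ t ω, (t, ω) ∈ E → Z t ω + ((Itg τ g (fun t ω => (Y t ω).toReal) t ω : ℝ) : EReal) ≤ W t ω := by
  induction hY with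
  | simple X hX =>
    intro τ g hs hb Z hZ E hE hpos ε hε
    simp only [EReal.toReal_coe] at hpos ⊢
    obtain ⟨V, v1, v2, v3⟩ := hE
    have hεV : ∀ t ω, 0 ≤ (ε : EReal) * V t ω := fun t ω =>
      EReal.mul_nonneg (EReal.coe_nonneg.2 hε.le) (C_nonneg v1 t ω)
    have hle : ∀ t ω, Z t ω + ((Itg τ g X t ω : ℝ) : EReal) ≤
        Z t ω + (ε : EReal) * V t ω + ((Itg τ g X t ω : ℝ) : EReal) := fun t ω =>
      add_le_add (le_add_of_nonneg_right (hεV t ω)) le_rfl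
    refine ⟨fun t ω => Z t ω + (ε : EReal) * V t ω + ((Itg τ g X t ω : ℝ) : EReal),
      .add _ _ (C_add hZ (C_smul hd v1 hε.le)) (SC_Itg hd hX hs hb) fun t ω => ?_, fun ω => ?_,
      fun t ω _ => hle t ω⟩
    · by_cases h : (t, ω) ∈ E
      · exact (hpos t ω h).trans (hle t ω)
      · rw [v3 t ω h, EReal.coe_mul_top_of_pos hε, EReal.add_top_of_ne_bot, EReal.top_add_coe]
        · exact le_top
        · exact ne_of_gt (lt_of_lt_of_le EReal.bot_lt_zero (C_nonneg hZ t ω))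
    · simp [v2 ω, Itg_zero]
  | lim Yn Y hYn hadapted hreal hconv ih =>
    intro τ g hs hb Z hZ E hE hpos ε hε
    choose En hEn using fun n => mart_good hd hA (hYn n)
    obtain ⟨E0, hE0⟩ := mart_good hd hA (.lim Yn Y hYn hadapted hreal hconv)
    set D := hull E ∩ ((⋂ n, En n) ∩ (E0 ∩ unifConvSet Yn Y)) with hD
    have hDE : InstantlyEnforceable M D := Enf_inter hd (Enf_hull hd hA hE)
      (Enf_inter hd (Enf_iInter hd fun n => (hEn n).1) (Enf_inter hd hE0.1 hconv))
    have hDD : DC D := DC_inter (DC_hull _) (DC_inter (fun t ω h s hs => by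
      rw [mem_iInter] at h ⊢
      exact fun n => (hEn n).2.1 t ω (h n) s hs) (DC_inter hE0.2.1 (DC_unif _ _)))
    set y : ℝ≥0 → Ω → ℝ := fun t ω => (Y t ω).toReal with hy
    set yn : ℕ → ℝ≥0 → Ω → ℝ := fun n t ω => (Yn n t ω).toReal with hyn
    have hDn : ∀ n t ω, (t, ω) ∈ D → (t, ω) ∈ En n := fun n t ω h => mem_iInter.1 h.2.1 n
    have hmY := mart_meas hd hA (.lim Yn Y hYn hadapted hreal hconv)
    have hcY : ∀ t ω, (t, ω) ∈ D → ContinuousOn (fun s => y s ω) (Icc 0 t) := fun t ω h =>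
      (hE0.2.2 t ω h.2.2.1).2
    have hcYn : ∀ n t ω, (t, ω) ∈ D → ContinuousOn (fun s => yn n s ω) (Icc 0 t) := fun n t ω h =>
      ((hEn n).2.2 t ω (hDn n t ω h)).2
    let U : ℕ → ℝ≥0 → Ω → ℝ := fun n t ω => Itg τ g (yn n) t ω - Itg τ g y t ω
    have hUm : ∀ n t, Measurable[M.F t] (U n t) := fun n t => by
      let := M.F t
      exact (Itg_meas hA hDE hs (mart_meas hd hA (hYn n)) (hcYn n) t).sub (Itg_meas hA hDE hs hmY hcY t)
    have hUc : ∀ n t ω, (t, ω) ∈ D → ContinuousOn (fun s => U n s ω) (Icc 0 t) := fun n t ω h =>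
      (Itg_cont hs (hcYn n t ω h)).sub (Itg_cont hs (hcY t ω h))
    set δ := ε / 3 with hδ
    have hδ0 : 0 < δ := by positivity
    let σ : ℕ → Ω → ℝ≥0∞ := fun n => hit D (U n) δ
    have hσ : ∀ n, M.IsStoppingTime (σ n) := fun n => hit_st hA hDE hDD (hUm n) (hUc n) δ
    have hkey : ∀ n t ω, (t, ω) ∈ D → Z (sm (σ n ω) t) ω + ((Itg τ g y (sm (σ n ω) t) ω : ℝ) : EReal) ≤
        Z (sm (σ n ω) t) ω + (δ : EReal) +
          ((Itg (stopT τ (σ n)) (stopG τ (σ n) g) (yn n) t ω : ℝ) : EReal) := by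
      intro n t ω h
      rw [Itg_stop hs, add_assoc, ← EReal.coe_add]
      refine add_le_add le_rfl (EReal.coe_le_coe_iff.2 ?_)
      have h1 : |U n (sm (σ n ω) t) ω| ≤ δ := hit_bd hDD (hUc n) h (by simp [U, Itg_zero, hδ0.le])
      have h2 := (abs_le.1 h1).1
      simp only [U] at h2
      linarith
    have hW : ∀ n, ∃ W, IsNonnegSupermart M W ∧ (∀ ω, W 0 ω = (Z 0 ω + (δ : EReal)) + (δ : EReal)) ∧
        ∀ t ω, (t, ω) ∈ D → Z (sm (σ n ω) t) ω + ((Itg τ g y (sm (σ n ω) t) ω : ℝ) : EReal) ≤ W t ω ∧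
          Z (sm (σ n ω) t) ω + (δ : EReal) +
          ((Itg (stopT τ (σ n)) (stopG τ (σ n) g) (yn n) t ω : ℝ) : EReal) ≤ W t ω := by
      intro n
      obtain ⟨W, w1, w2, w3⟩ := ih n _ _ (Str_stop hs (hσ n)) (Bd_stop hb)
        (fun t ω => Z (sm (σ n ω) t) ω + (δ : EReal)) (C_add (C_stop hd hZ (hσ n)) (C_const hd hδ0.le))
        D hDE (fun t ω h => (hpos _ _ (h.1 _ (sm_le _ _))).trans (hkey n t ω h)) δ hδ0
      refine ⟨W, w1, fun ω => by rw [w2, sm_at_zero], fun t ω h => ⟨?_, w3 t ω h⟩⟩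
      exact (hkey n t ω h).trans (w3 t ω h)
    choose W w1 w2 w3 using hW
    obtain ⟨V, v1, v2, v3⟩ := hDE
    have hδV : ∀ t ω, 0 ≤ (δ : EReal) * V t ω := fun t ω =>
      EReal.mul_nonneg (EReal.coe_nonneg.2 hδ0.le) (C_nonneg v1 t ω)
    have hL := IsNonnegSupermart.liminf W w1
    refine ⟨_, C_add hL (C_smul hd v1 hδ0.le), fun ω => ?_, fun t ω _ => ?_⟩
    · simp only [w2, v2, liminf_const, mul_one]
      rw [add_assoc, add_assoc, ← EReal.coe_add, ← EReal.coe_add, hδ]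
      congr 2; ring
    · by_cases h : (t, ω) ∈ D
      · refine le_trans ?_ (le_add_of_nonneg_right (hδV t ω))
        refine le_liminf_of_le (by isBoundedDefault) ?_
        have hreal' : ∀ s ≤ t, ∃ r : ℝ, Y s ω = r := fun s hs =>
          (hE0.2.2 s ω (hE0.2.1 t ω h.2.2.1 s hs)).1
        have hreal'' : ∀ n, ∀ s ≤ t, ∃ r : ℝ, Yn n s ω = r := fun n s hs =>
          ((hEn n).2.2 s ω ((hEn n).2.1 t ω (hDn n t ω h) s hs)).1
        have hev : ∀ᶠ n in atTop, ∀ s ≤ t, |U n s ω| < δ := by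
          obtain ⟨N, hN⟩ := hs.ex ω t
          set B := ∑ k ∈ Finset.range N, |g k ω| with hB
          have hB0 : 0 ≤ B := Finset.sum_nonneg fun _ _ => abs_nonneg _
          have hη : 0 < δ / (2 * B + 1) := by positivity
          filter_upwards [conv_real hreal' hreal'' h.2.2.2 hη] with n hn s hst
          have hN' : ∀ n, N ≤ n → (s : ℝ≥0∞) ≤ τ n ω := fun n hn =>
            le_trans (by exact_mod_cast hst) (hN n hn)
          simp only [U]
          rw [Itg_sum g _ hN', Itg_sum g _ hN', ← Finset.sum_sub_distrib]
          refine (Finset.abs_sum_le_sum_abs _ _).trans_lt ?_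
          have : ∀ k ∈ Finset.range N, |g k ω * (yn n (sm (τ (k + 1) ω) s) ω - yn n (sm (τ k ω) s) ω)
              - g k ω * (y (sm (τ (k + 1) ω) s) ω - y (sm (τ k ω) s) ω)| ≤
              |g k ω| * (2 * (δ / (2 * B + 1))) := by
            intro k _
            rw [← mul_sub, abs_mul]
            refine mul_le_mul_of_nonneg_left ?_ (abs_nonneg _)
            have a1 := abs_lt.1 (hn (sm (τ (k + 1) ω) s) ((sm_le _ _).trans hst))
            have a2 := abs_lt.1 (hn (sm (τ k ω) s) ((sm_le _ _).trans hst))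
            simp only [hy, hyn]
            rw [abs_le]
            constructor <;> linarith
          refine (Finset.sum_le_sum this).trans_lt ?_
          rw [← Finset.sum_mul, ← hB]
          have : B * (2 * (δ / (2 * B + 1))) = δ * (2 * B / (2 * B + 1)) := by ring
          rw [this]
          have : 2 * B / (2 * B + 1) < 1 := by rw [div_lt_one (by positivity)]; linarith
          nlinarith
        filter_upwards [hev] with n hn
        have h5 := (w3 n t ω h).1
        rwa [sm_of_le (hit_ge hn)] at h5
      · rw [v3 t ω h, EReal.coe_mul_top_of_pos hδ0, EReal.add_top_of_ne_bot]
        · exact le_top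
        · exact ne_of_gt (lt_of_lt_of_le EReal.bot_lt_zero (C_nonneg hL t ω))

open Classical in
def trG (g : ℕ → Ω → ℝ) (N : ℕ) (n : ℕ) (ω : Ω) : ℝ :=
  if ∀ k ≤ n, |g k ω| ≤ N then g n ω else 0

open Classical in
def trK (τ : ℕ → Ω → ℝ≥0∞) (g : ℕ → Ω → ℝ) (N : ℕ) (ω : Ω) : ℝ≥0∞ :=
  if h : ∃ k, ¬ (|g k ω| ≤ N) then τ (Nat.find h) ω else ⊤

lemma Bd_tr (g : ℕ → Ω → ℝ) (N : ℕ) : Bd (trG g N) := by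
  intro n
  refine ⟨N, fun ω => ?_⟩
  unfold trG
  split_ifs with h
  · exact h n le_rfl
  · simp

lemma ms_bd {τ : ℕ → Ω → ℝ≥0∞} {g : ℕ → Ω → ℝ} (h : Str M τ g) (N k : ℕ) (t : ℝ≥0) :
    MeasurableSet[M.F t] {ω | |{ω | τ k ω ≤ (t : ℝ≥0∞)}.indicator (g k) ω| ≤ N} := by
  let := M.F t
  exact measurableSet_le (h.meas k t).abs measurable_const

lemma Str_tr {τ : ℕ → Ω → ℝ≥0∞} {g : ℕ → Ω → ℝ} (h : Str M τ g) (N : ℕ) : Str M τ (trG g N) where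
  stpd := h.stpd
  mono := h.mono
  zero := h.zero
  top := h.top
  g_top n ω hn := by
    unfold trG
    rw [h.g_top n ω hn]; simp
  meas n t := by
    classical
    have e : {ω | τ n ω ≤ (t : ℝ≥0∞)}.indicator (trG g N n) =
        (⋂ k ∈ Finset.range (n + 1), {ω | |{ω | τ k ω ≤ (t : ℝ≥0∞)}.indicator (g k) ω| ≤ N}).indicator
          ({ω | τ n ω ≤ (t : ℝ≥0∞)}.indicator (g n)) := by
      ext ω
      by_cases hn : τ n ω ≤ (t : ℝ≥0∞)
      · have hk : ∀ k ≤ n, τ k ω ≤ (t : ℝ≥0∞) := fun k hk => (h.mono ω hk).trans hn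
        have : (ω ∈ ⋂ k ∈ Finset.range (n + 1),
            {ω | |{ω | τ k ω ≤ (t : ℝ≥0∞)}.indicator (g k) ω| ≤ N}) ↔ ∀ k ≤ n, |g k ω| ≤ N := by
          simp only [mem_iInter, Finset.mem_range, Nat.lt_succ_iff, mem_ofPred_eq]
          refine forall₂_congr fun k hk' => ?_
          simp [indicator, hk k hk']
        have hn' : ω ∈ {ω | τ n ω ≤ (t : ℝ≥0∞)} := hn
        rw [indicator_of_mem hn', trG]
        by_cases hall : ∀ k ≤ n, |g k ω| ≤ N
        · rw [if_pos hall, indicator_of_mem (this.2 hall), indicator_of_mem hn']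
        · rw [if_neg hall, indicator_of_notMem (fun hh => hall (this.1 hh))]
      · simp [indicator, hn]
    rw [e]
    let := M.F t
    refine Measurable.indicator (h.meas n t) ?_
    exact Finset.measurableSet_biInter _ fun k _ => ms_bd h N k t

lemma trK_st {τ : ℕ → Ω → ℝ≥0∞} {g : ℕ → Ω → ℝ} (h : Str M τ g) (N : ℕ) :
    M.IsStoppingTime (trK τ g N) := by
  classical
  intro t
  have e : {ω | trK τ g N ω ≤ (t : ℝ≥0∞)} =
      ⋃ k, ({ω | |{ω | τ k ω ≤ (t : ℝ≥0∞)}.indicator (g k) ω| ≤ N}ᶜ ∩ {ω | τ k ω ≤ (t : ℝ≥0∞)}) := by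
    ext ω
    simp only [mem_ofPred_eq, mem_iUnion, mem_inter_iff, mem_compl_iff]
    constructor
    · intro hle
      by_cases hex : ∃ k, ¬ (|g k ω| ≤ N)
      · rw [trK, dif_pos hex] at hle
        refine ⟨Nat.find hex, ?_, hle⟩
        simp only [indicator, mem_ofPred_eq, hle, if_true]
        exact Nat.find_spec hex
      · rw [trK, dif_neg hex] at hle
        exact absurd hle (by simp)
    · rintro ⟨k, hk, hle⟩
      simp only [indicator, mem_ofPred_eq, hle, if_true] at hk
      have hex : ∃ k, ¬ (|g k ω| ≤ N) := ⟨k, hk⟩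
      rw [trK, dif_pos hex]
      exact (h.mono ω (Nat.find_min' hex hk)).trans hle
  rw [e]
  exact MeasurableSet.iUnion fun k => (ms_bd h N k t).compl.inter (h.stpd k t)

lemma Itg_tr {τ : ℕ → Ω → ℝ≥0∞} {g : ℕ → Ω → ℝ} (h : Str M τ g) (N : ℕ) (X : ℝ≥0 → Ω → ℝ)
    (t : ℝ≥0) (ω : Ω) : Itg τ (trG g N) X t ω = Itg τ g X (sm (trK τ g N ω) t) ω := by
  classical
  unfold Itg
  congr 1; ext n
  rw [sm_sm, sm_sm]
  by_cases hex : ∃ k, ¬ (|g k ω| ≤ N)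
  · have hK : trK τ g N ω = τ (Nat.find hex) ω := by rw [trK, dif_pos hex]
    by_cases hn : n < Nat.find hex
    · have h1 : trG g N n ω = g n ω := by
        unfold trG
        rw [if_pos]
        intro k hk
        exact not_not.1 (Nat.find_min hex (hk.trans_lt hn))
      rw [h1, hK, min_eq_left (h.mono ω hn), min_eq_left (h.mono ω hn.le)]
    · rw [not_lt] at hn
      have h1 : trG g N n ω = 0 := by
        unfold trG
        rw [if_neg]
        intro hall
        exact Nat.find_spec hex (hall _ hn)
      rw [h1, hK, min_eq_right (h.mono ω (hn.trans n.le_succ)), min_eq_right (h.mono ω hn)]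
      simp
  · have hK : trK τ g N ω = ⊤ := by rw [trK, dif_neg hex]
    push Not at hex
    have h1 : trG g N n ω = g n ω := by
      unfold trG
      rw [if_pos fun k _ => hex k]
    rw [h1, hK]; simp

lemma trK_ev {τ : ℕ → Ω → ℝ≥0∞} {g : ℕ → Ω → ℝ} (h : Str M τ g) (t : ℝ≥0) (ω : Ω) :
    ∀ᶠ N : ℕ in atTop, (t : ℝ≥0∞) ≤ trK τ g N ω := by
  classical
  obtain ⟨n0, hn0⟩ := h.ex ω t
  obtain ⟨N0, hN0⟩ := exists_nat_ge (∑ k ∈ Finset.range n0, |g k ω|)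
  filter_upwards [eventually_ge_atTop N0] with N hN
  unfold trK
  split_ifs with hex
  · refine hn0 _ ?_
    by_contra hlt
    rw [not_le] at hlt
    refine Nat.find_spec hex ?_
    refine (Finset.single_le_sum (f := fun k => |g k ω|) (fun _ _ => abs_nonneg _)
      (Finset.mem_range.2 hlt)).trans (hN0.trans ?_)
    exact_mod_cast hN
  · exact le_top

lemma M2 (hd : 0 < M.d) (hA : AssumptionA M) {Y : ℝ≥0 → Ω → EReal} (hY : IsMartingale M Y)
    {τ : ℕ → Ω → ℝ≥0∞} {g : ℕ → Ω → ℝ} (hs : Str M τ g) {Z : ℝ≥0 → Ω → EReal}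
    (hZ : IsNonnegSupermart M Z) {E : Set (ℝ≥0 × Ω)} (hE : InstantlyEnforceable M E)
    (hpos : ∀ t ω, (t, ω) ∈ E →
      0 ≤ Z t ω + ((Itg τ g (fun t ω => (Y t ω).toReal) t ω : ℝ) : EReal)) {ε : ℝ} (hε : 0 < ε) :
    ∃ W, IsNonnegSupermart M W ∧ (∀ ω, W 0 ω = Z 0 ω + (ε : EReal)) ∧
      (∀ t ω, (t, ω) ∈ E → Z t ω + ((Itg τ g (fun t ω => (Y t ω).toReal) t ω : ℝ) : EReal) ≤ W t ω) ∧
      ∀ t ω, (t, ω) ∉ E → W t ω = ⊤ := by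
  set y : ℝ≥0 → Ω → ℝ := fun t ω => (Y t ω).toReal with hy
  set δ := ε / 2 with hδ
  have hδ0 : 0 < δ := by positivity
  have hH := Enf_hull hd hA hE
  have hW : ∀ N : ℕ, ∃ W, IsNonnegSupermart M W ∧ (∀ ω, W 0 ω = Z 0 ω + (δ : EReal)) ∧
      ∀ t ω, (t, ω) ∈ hull E → Z (sm (trK τ g N ω) t) ω +
        ((Itg τ g y (sm (trK τ g N ω) t) ω : ℝ) : EReal) ≤ W t ω := by
    intro N
    obtain ⟨W, w1, w2, w3⟩ := M1 hd hA hY τ (trG g N) (Str_tr hs N) (Bd_tr g N)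
      (fun t ω => Z (sm (trK τ g N ω) t) ω) (C_stop hd hZ (trK_st hs N)) (hull E) hH
      (fun t ω h => by
        rw [Itg_tr hs]
        exact hpos _ _ (h _ (sm_le _ _))) δ hδ0
    refine ⟨W, w1, fun ω => by rw [w2, sm_at_zero], fun t ω h => ?_⟩
    rw [← Itg_tr hs]
    exact w3 t ω h
  choose W w1 w2 w3 using hW
  obtain ⟨V, v1, v2, v3⟩ := hH
  have hδV : ∀ t ω, 0 ≤ (δ : EReal) * V t ω := fun t ω =>
    EReal.mul_nonneg (EReal.coe_nonneg.2 hδ0.le) (C_nonneg v1 t ω)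
  have hL := IsNonnegSupermart.liminf W w1
  have htop : ∀ t ω, (t, ω) ∉ hull E → liminf (fun n => W n t ω) atTop + (δ : EReal) * V t ω = ⊤ := by
    intro t ω h
    rw [v3 t ω h, EReal.coe_mul_top_of_pos hδ0, EReal.add_top_of_ne_bot]
    exact ne_of_gt (lt_of_lt_of_le EReal.bot_lt_zero (C_nonneg hL t ω))
  refine ⟨_, C_add hL (C_smul hd v1 hδ0.le), fun ω => ?_, fun t ω _ => ?_,
    fun t ω h => htop t ω fun h' => h (hull_sub E h')⟩
  · simp only [w2, v2, liminf_const, mul_one]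
    rw [add_assoc, ← EReal.coe_add, hδ]
    congr 2; ring
  · by_cases h : (t, ω) ∈ hull E
    · refine le_trans ?_ (le_add_of_nonneg_right (hδV t ω))
      refine le_liminf_of_le (by isBoundedDefault) ?_
      filter_upwards [trK_ev hs t ω] with n hn
      have h5 := w3 n t ω h
      rwa [sm_of_le hn] at h5
    · rw [htop t ω h]; exact le_top

lemma upperExp_nonneg [Nonempty Ω] (Φ : ℝ≥0 → Ω → EReal) : 0 ≤ upperExp M Φ := by
  refine le_sInf ?_
  rintro x ⟨Z, h1, h2, h3⟩
  obtain ⟨ω⟩ := ‹Nonempty Ω›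
  rw [← h2 ω]; exact C_nonneg h1 0 ω

lemma transfer [Nonempty Ω] (hd : 0 < M.d) (hA : AssumptionA M) {Y : ℝ≥0 → Ω → EReal}
    (hY : IsMartingale M Y) {τ : ℕ → Ω → ℝ≥0∞} {g : ℕ → Ω → ℝ} (hs : Str M τ g)
    {E : Set (ℝ≥0 × Ω)} (hE : InstantlyEnforceable M E) {c : ℝ} (hc : 0 < c)
    {Φ Ψ : ℝ≥0 → Ω → EReal}
    (h : ∀ t ω, (t, ω) ∈ E → 0 ≤ Φ t ω ∧
      Φ t ω ≤ c * Ψ t ω + ((Itg τ g (fun t ω => (Y t ω).toReal) t ω : ℝ) : EReal)) :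
    upperExp M Φ ≤ c * upperExp M Ψ := by
  have hc' : (0 : EReal) < c := EReal.coe_pos.2 hc
  rw [← EReal.div_le_iff_le_mul hc' (EReal.coe_ne_top c)]
  refine le_sInf ?_
  rintro x ⟨Z, h1, h2, h3⟩
  rw [EReal.div_le_iff_le_mul hc' (EReal.coe_ne_top c)]
  have hx : 0 ≤ x := by
    obtain ⟨ω⟩ := ‹Nonempty Ω›
    rw [← h2 ω]; exact C_nonneg h1 0 ω
  have key : ∀ ε : ℝ, 0 < ε → upperExp M Φ ≤ c * x + ε := by
    intro ε hε
    have hle : ∀ t ω, (t, ω) ∈ E →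
        Φ t ω ≤ c * Z t ω + ((Itg τ g (fun t ω => (Y t ω).toReal) t ω : ℝ) : EReal) := fun t ω hE =>
      (h t ω hE).2.trans (add_le_add (mul_le_mul_of_nonneg_left (h3 t ω) hc'.le) le_rfl)
    obtain ⟨W, w1, w2, w3, w4⟩ := M2 hd hA hY hs (C_smul hd h1 hc.le) hE
      (fun t ω hE => (h t ω hE).1.trans (hle t ω hE)) hε
    refine sInf_le ⟨W, w1, fun ω => by rw [w2, h2], fun t ω => ?_⟩
    by_cases hω : (t, ω) ∈ E
    · exact (hle t ω hω).trans (w3 t ω hω)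
    · rw [w4 t ω hω]; exact le_top
  by_cases htop : (c : EReal) * x = ⊤
  · rw [htop]; exact le_top
  · have hnb : (c : EReal) * x ≠ ⊥ :=
      ne_of_gt (lt_of_lt_of_le EReal.bot_lt_zero (EReal.mul_nonneg hc'.le hx))
    lift (c : EReal) * x to ℝ using ⟨htop, hnb⟩ with r
    refine EReal.le_of_forall_lt_iff_le.1 fun z hz => ?_
    have hz' : r < z := EReal.coe_lt_coe_iff.1 hz
    have := key (z - r) (sub_pos.2 hz')
    rwa [← EReal.coe_add, add_sub_cancel] at this

def Gb (p : ℝ) (n : ℕ) (x : ℕ → ℝ) : ℝ :=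
  p ^ 2 * mx_ x n ^ (p - 1) * hb (x n) (sq_ x n) (mx_ x n)

def Ga (p : ℝ) (n : ℕ) (x : ℕ → ℝ) : ℝ :=
  p ^ 2 * sq_ x n ^ (p - 1) * ha (x n) (sq_ x n) (mx_ x n)

lemma mx_meas (n : ℕ) : Measurable fun x : ℕ → ℝ => mx_ x n := by
  induction n with
  | zero => exact (measurable_pi_apply 0).abs
  | succ n ih => exact ih.max (measurable_pi_apply (n + 1)).abs

lemma sq_meas (n : ℕ) : Measurable fun x : ℕ → ℝ => sq_ x n := by
  unfold sq_
  fun_prop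

lemma Gb_meas (p : ℝ) (n : ℕ) : Measurable (Gb p n) := by
  have h1 := mx_meas n
  have h2 := sq_meas n
  have h3 : Measurable fun x : ℕ → ℝ => x n := measurable_pi_apply n
  have h4 : Measurable fun x : ℕ → ℝ => (if 0 ≤ x n then (1 : ℝ) else -1) :=
    Measurable.ite (measurableSet_le measurable_const h3) measurable_const measurable_const
  unfold Gb hb wb
  exact ((h1.pow_const (p - 1)).const_mul (p ^ 2)).mul
    (h4.mul ((measurable_const.max ((h3.abs.add h2).sub (h1.max h2))).div h2))

lemma Ga_meas (p : ℝ) (n : ℕ) : Measurable (Ga p n) := by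
  have h1 := mx_meas n
  have h2 := sq_meas n
  have h3 : Measurable fun x : ℕ → ℝ => x n := measurable_pi_apply n
  unfold Ga ha
  exact ((h2.pow_const (p - 1)).const_mul (p ^ 2)).mul
    (h3.neg.div ((h2.pow_const 2).add (h1.pow_const 2)).sqrt)

lemma mx_congr {x z : ℕ → ℝ} {n : ℕ} (h : ∀ k ≤ n, x k = z k) : mx_ x n = mx_ z n := by
  induction n with
  | zero => simp [mx_, h 0 le_rfl]
  | succ n ih => simp only [mx_]; rw [ih fun k hk => h k (hk.trans n.le_succ), h (n + 1) le_rfl]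

lemma sq_congr {x z : ℕ → ℝ} {n : ℕ} (h : ∀ k ≤ n, x k = z k) : sq_ x n = sq_ z n := by
  unfold sq_
  congr 1
  refine Finset.sum_congr rfl fun k hk => ?_
  rw [Finset.mem_range] at hk
  rw [h (k + 1) hk, h k hk.le]

lemma Gb_congr (p : ℝ) {x z : ℕ → ℝ} {n : ℕ} (h : ∀ k ≤ n, x k = z k) : Gb p n x = Gb p n z := by
  unfold Gb; rw [mx_congr h, sq_congr h, h n le_rfl]

lemma Ga_congr (p : ℝ) {x z : ℕ → ℝ} {n : ℕ} (h : ∀ k ≤ n, x k = z k) : Ga p n x = Ga p n z := by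
  unfold Ga; rw [mx_congr h, sq_congr h, h n le_rfl]

open Classical in
def stG (G : ℕ → (ℕ → ℝ) → ℝ) (T : ℕ → Ω → ℝ≥0∞) (y : ℝ≥0 → Ω → ℝ) (n : ℕ) (ω : Ω) : ℝ :=
  if T n ω = ⊤ then 0 else G n fun k => y (T k ω).toNNReal ω - y 0 ω

lemma toNN_sm {a : ℝ≥0∞} {t : ℝ≥0} (h : a ≤ t) : a.toNNReal = sm a t := by
  unfold sm; rw [min_eq_left h]

lemma stG_eq {G : ℕ → (ℕ → ℝ) → ℝ}
    (hG' : ∀ n x z, (∀ k ≤ n, x k = z k) → G n x = G n z) (T : ProperSeq M) (y : ℝ≥0 → Ω → ℝ)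
    {n : ℕ} {ω : Ω} {t : ℝ≥0} (hn : T.τ n ω ≤ t) :
    stG G T.τ y n ω = G n fun k => y (sm (T.τ k ω) t) ω - y 0 ω := by
  unfold stG
  rw [if_neg (ne_top_of_le_ne_top ENNReal.coe_ne_top hn)]
  refine hG' _ _ _ fun k hk => ?_
  have : T.τ k ω ≤ t := (T.mono ω hk).trans hn
  simp only [toNN_sm this]

lemma stG_MS (hA : AssumptionA M) {E : Set (ℝ≥0 × Ω)} (h : InstantlyEnforceable M E)
    {y : ℝ≥0 → Ω → ℝ} (hU : ∀ t, Measurable[M.F t] (y t))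
    (hc : ∀ t ω, (t, ω) ∈ E → ContinuousOn (fun s => y s ω) (Icc 0 t))
    {G : ℕ → (ℕ → ℝ) → ℝ} (hG : ∀ n, Measurable (G n))
    (hG' : ∀ n x z, (∀ k ≤ n, x k = z k) → G n x = G n z) (T : ProperSeq M) (n : ℕ) :
    MS M (T.τ n) (stG G T.τ y n) := by
  intro t
  classical
  have e : {ω | T.τ n ω ≤ (t : ℝ≥0∞)}.indicator (stG G T.τ y n) =
      {ω | T.τ n ω ≤ (t : ℝ≥0∞)}.indicator
        (fun ω => G n fun k => y (sm (T.τ k ω) t) ω - y 0 ω) := by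
    refine indicator_congr fun ω hω => ?_
    exact stG_eq hG' T y hω
  rw [e]
  have hT := T.stopping n t
  have h1 : ∀ k, Measurable[M.F t] fun ω => y (sm (T.τ k ω) t) ω :=
    fun k => meas_stopped hA h hU hc (T.stopping k) t
  have h2 : Measurable[M.F t] (y 0) := (hU 0).mono (M.mono zero_le) le_rfl
  let := M.F t
  refine Measurable.indicator ?_ hT
  exact (hG n).comp (measurable_pi_lambda _ fun k => (h1 k).sub h2)

/-- All stopped times are eventually constant. -/
lemma PS_ex (T : ProperSeq M) (t : ℝ≥0) (ω : Ω) : ∃ N, ∀ n, N ≤ n → sm (T.τ n ω) t = sm (T.τ N ω) t := by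
  rcases T.proper ω with h | ⟨N, hN⟩
  · obtain ⟨N, hN⟩ := eventually_atTop.1 (h.eventually (eventually_ge_nhds (ENNReal.coe_lt_top (r := t))))
    exact ⟨N, fun n hn => by rw [sm_of_le (hN n hn), sm_of_le (hN N le_rfl)]⟩
  · exact ⟨N, fun n hn => by rw [hN n hn]⟩

lemma stG_Itg {G : ℕ → (ℕ → ℝ) → ℝ}
    (hG' : ∀ n x z, (∀ k ≤ n, x k = z k) → G n x = G n z) (T : ProperSeq M) (y : ℝ≥0 → Ω → ℝ)
    {t : ℝ≥0} {ω : Ω} {N : ℕ} (hN : ∀ n, N ≤ n → sm (T.τ n ω) t = sm (T.τ N ω) t)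
    {z : ℕ → ℝ} (hz : ∀ k, z k = y (sm (T.τ k ω) t) ω - y 0 ω) :
    Itg T.τ (stG G T.τ y) y t ω = ∑ n ∈ Finset.range N, G n z * (z (n + 1) - z n) := by
  unfold Itg
  rw [tsum_eq_sum (s := Finset.range N)]
  · refine Finset.sum_congr rfl fun n _ => ?_
    rw [hz (n + 1), hz n]
    by_cases hn : T.τ n ω ≤ t
    · rw [stG_eq hG' T y hn]
      have : z = fun k => y (sm (T.τ k ω) t) ω - y 0 ω := funext hz
      rw [this]; ring
    · rw [not_le] at hn
      rw [sm_of_le hn.le, sm_of_le (hn.le.trans (T.mono ω n.le_succ))]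
      ring
  · intro n hn
    rw [Finset.mem_range, not_lt] at hn
    rw [hN n hn, hN (n + 1) (hn.trans n.le_succ)]
    ring

lemma mx_mono {z : ℕ → ℝ} {n m : ℕ} (h : n ≤ m) : mx_ z n ≤ mx_ z m :=
  monotone_nat_of_le_succ (f := mx_ z) (fun _ => le_max_left _ _) h

lemma mx_att (z : ℕ → ℝ) (n : ℕ) : ∃ k, mx_ z n = |z k| := by
  induction n with
  | zero => exact ⟨0, rfl⟩
  | succ n ih =>
    obtain ⟨k, hk⟩ := ih
    simp only [mx_]
    rcases max_choice (mx_ z n) |z (n + 1)| with h | h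
    · exact ⟨k, h.trans hk⟩
    · exact ⟨n + 1, h⟩

section vals
variable {X : ℝ≥0 → Ω → EReal} {T : ProperSeq M} {t : ℝ≥0} {ω : Ω} {N : ℕ} {z : ℕ → ℝ}

lemma sup_val (hr : ∀ s ≤ t, ∃ r : ℝ, X s ω = r)
    (hN : ∀ n, N ≤ n → sm (T.τ n ω) t = sm (T.τ N ω) t)
    (hz : ∀ k, z k = (X (sm (T.τ k ω) t) ω).toReal - (X 0 ω).toReal) :
    supAlong (fun s ω' => X s ω' - X 0 ω') T.τ t ω = ENNReal.ofReal (mx_ z N) := by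
  have hv : ∀ n, (stopVal (fun s ω' => X s ω' - X 0 ω') (T.τ n) t ω).abs = ENNReal.ofReal |z n| := by
    intro n
    obtain ⟨a, ha⟩ := hr (sm (T.τ n ω) t) (sm_le _ _)
    obtain ⟨b, hb⟩ := hr 0 zero_le
    unfold stopVal
    rw [stopMin_eq]
    show (X (sm (T.τ n ω) t) ω - X 0 ω).abs = _
    rw [hz, ha, hb, ← EReal.coe_sub, EReal.abs_def, EReal.toReal_coe, EReal.toReal_coe]
  unfold supAlong
  simp_rw [hv]
  apply le_antisymm
  · refine iSup_le fun n => ENNReal.ofReal_le_ofReal ?_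
    by_cases hn : n ≤ N
    · exact (mx_ge z n).trans (mx_mono hn)
    · have : z n = z N := by rw [hz, hz, hN n (not_le.1 hn).le]
      rw [this]; exact mx_ge z N
  · obtain ⟨k, hk⟩ := mx_att z N
    rw [hk]; exact le_iSup (fun n => ENNReal.ofReal |z n|) k

lemma sq_val (hr : ∀ s ≤ t, ∃ r : ℝ, X s ω = r)
    (hN : ∀ n, N ≤ n → sm (T.τ n ω) t = sm (T.τ N ω) t)
    (hz : ∀ k, z k = (X (sm (T.τ k ω) t) ω).toReal - (X 0 ω).toReal) :
    sqVarAlong X T.τ t ω = ENNReal.ofReal (sq_ z N ^ 2) := by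
  have hv : ∀ n, ((stopVal X (T.τ (n + 1)) t ω - stopVal X (T.τ n) t ω) ^ 2).abs =
      ENNReal.ofReal ((z (n + 1) - z n) ^ 2) := by
    intro n
    obtain ⟨a, ha⟩ := hr (sm (T.τ (n + 1) ω) t) (sm_le _ _)
    obtain ⟨b, hb⟩ := hr (sm (T.τ n ω) t) (sm_le _ _)
    unfold stopVal
    rw [hz, hz, stopMin_eq, stopMin_eq, ha, hb, ← EReal.coe_sub, ← EReal.coe_pow, EReal.abs_def,
      EReal.toReal_coe, EReal.toReal_coe, abs_of_nonneg (sq_nonneg _)]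
    congr 1; ring
  unfold sqVarAlong
  simp_rw [hv]
  rw [tsum_eq_sum (s := Finset.range N), ← ENNReal.ofReal_sum_of_nonneg fun _ _ => sq_nonneg _]
  · rw [sq_, Real.sq_sqrt (Finset.sum_nonneg fun _ _ => sq_nonneg _)]
  · intro n hn
    rw [Finset.mem_range, not_lt] at hn
    rw [hz, hz, hN n hn, hN (n + 1) (hn.trans n.le_succ)]
    simp
end vals

lemma E_ofReal {a : ℝ} (ha : 0 ≤ a) : ((ENNReal.ofReal a : ℝ≥0∞) : EReal) = (a : EReal) := by
  rw [EReal.coe_ennreal_ofReal, max_eq_left ha]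

section main
variable {X : ℝ≥0 → Ω → EReal} {p : ℝ}

def PhiQ (X : ℝ≥0 → Ω → EReal) (T : ProperSeq M) (p : ℝ) (t : ℝ≥0) (ω : Ω) : EReal :=
  ((sqVarAlong X T.τ t ω ^ (p / 2) : ℝ≥0∞) : EReal)

def PhiM (X : ℝ≥0 → Ω → EReal) (T : ProperSeq M) (p : ℝ) (t : ℝ≥0) (ω : Ω) : EReal :=
  ((supAlong (fun s ω' => X s ω' - X 0 ω') T.τ t ω ^ p : ℝ≥0∞) : EReal)

lemma main_vals (hp : 1 ≤ p) {E : Set (ℝ≥0 × Ω)} (hE : Good M X E) (T : ProperSeq M) {t : ℝ≥0} {ω : Ω}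
    (h : (t, ω) ∈ E) : ∃ (z : ℕ → ℝ) (N : ℕ), z 0 = 0 ∧
      (∀ n, N ≤ n → sm (T.τ n ω) t = sm (T.τ N ω) t) ∧
      (∀ k, z k = (X (sm (T.τ k ω) t) ω).toReal - (X 0 ω).toReal) ∧
      PhiQ X T p t ω = ((sq_ z N ^ p : ℝ) : EReal) ∧ PhiM X T p t ω = ((mx_ z N ^ p : ℝ) : EReal) := by
  obtain ⟨N, hN⟩ := PS_ex T t ω
  have hr : ∀ s ≤ t, ∃ r : ℝ, X s ω = r := fun s hs => (hE.2.2 s ω (hE.2.1 t ω h s hs)).1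
  refine ⟨_, N, ?_, hN, fun k => rfl, ?_, ?_⟩
  · simp [T.zero, sm_zero]
  · unfold PhiQ
    rw [sq_val hr hN (fun k => rfl), ENNReal.ofReal_rpow_of_nonneg (sq_nonneg _) (by linarith),
      E_ofReal (by positivity), ← Real.rpow_natCast, ← Real.rpow_mul (sq_nonneg' _ _)]
    congr 2; push_cast; ring
  · unfold PhiM
    rw [sup_val hr hN (fun k => rfl), ENNReal.ofReal_rpow_of_nonneg (mx_nonneg _ _) (by linarith),
      E_ofReal (Real.rpow_nonneg (mx_nonneg _ _) _)]

lemma main_b [Nonempty Ω] (hd : 0 < M.d) (hA : AssumptionA M) (hX : IsMartingale M X)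
    (T : ProperSeq M) (hp : 1 ≤ p) :
    upperExp M (PhiM X T p) ≤ ((3 * p) ^ p : ℝ) * upperExp M (PhiQ X T p) := by
  obtain ⟨E, hE⟩ := mart_good hd hA hX
  have hG' : ∀ n x z, (∀ k ≤ n, x k = z k) → Gb p n x = Gb p n z := fun n x z h => Gb_congr p h
  have hms := stG_MS hA hE.1 (mart_meas hd hA hX) (fun t ω h => (hE.2.2 t ω h).2) (Gb_meas p) hG' T
  refine transfer hd hA hX (Str_norm T hms fun n ω h => by simp [stG, h]) hE.1 (by positivity)
    fun t ω h => ?_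
  obtain ⟨z, N, z0, hN, hz, e1, e2⟩ := main_vals hp hE T h
  rw [e1, e2, Itg_norm, stG_Itg hG' T _ hN hz, ← EReal.coe_mul, ← EReal.coe_add]
  exact ⟨EReal.coe_nonneg.2 (Real.rpow_nonneg (mx_nonneg _ _) _),
    EReal.coe_le_coe_iff.2 (det_b hp z z0 N)⟩

lemma main_a [Nonempty Ω] (hd : 0 < M.d) (hA : AssumptionA M) (hX : IsMartingale M X)
    (T : ProperSeq M) (hp : 1 ≤ p) :
    upperExp M (PhiQ X T p) ≤ ((3 * p) ^ p : ℝ) * upperExp M (PhiM X T p) := by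
  obtain ⟨E, hE⟩ := mart_good hd hA hX
  have hG' : ∀ n x z, (∀ k ≤ n, x k = z k) → Ga p n x = Ga p n z := fun n x z h => Ga_congr p h
  have hms := stG_MS hA hE.1 (mart_meas hd hA hX) (fun t ω h => (hE.2.2 t ω h).2) (Ga_meas p) hG' T
  refine transfer hd hA hX (Str_norm T hms fun n ω h => by simp [stG, h]) hE.1 (by positivity)
    fun t ω h => ?_
  obtain ⟨z, N, z0, hN, hz, e1, e2⟩ := main_vals hp hE T h
  rw [e1, e2, Itg_norm, stG_Itg hG' T _ hN hz, ← EReal.coe_mul, ← EReal.coe_add]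
  exact ⟨EReal.coe_nonneg.2 (Real.rpow_nonneg (sq_nonneg' _ _) _),
    EReal.coe_le_coe_iff.2 (det_a hp z z0 N)⟩

/-- The case without basic martingales. -/
lemma C_zero (hd : M.d = 0) {Z : ℝ≥0 → Ω → EReal} (hZ : IsNonnegSupermart M Z) :
    ∀ t ω, Z t ω = 0 := by
  have hs : ∀ Y, IsSimpleCapital M Y → ∀ t ω, Y t ω = 0 := by
    rintro Y ⟨G, hG⟩ t ω
    have : IsEmpty (Fin M.d) := by rw [hd]; infer_instance
    rw [hG]; simp
  induction hZ with
  | simple X hX hpos => intro t ω; simp [hs X hX t ω]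
  | add X Y hX hY hpos ih => intro t ω; simp [hs Y hY t ω, ih t ω]
  | liminf Xs hXs ih => intro t ω; simp [ih, liminf_const]

lemma mart_zero [Nonempty Ω] (hd : M.d = 0) (hX : IsMartingale M X) : ∀ t ω, X t ω = 0 := by
  cases hX with
  | simple X hX =>
    intro t ω
    obtain ⟨G, hG⟩ := hX
    have : IsEmpty (Fin M.d) := by rw [hd]; infer_instance
    show ((X t ω : ℝ) : EReal) = 0
    rw [hG]; simp
  | lim Xn X hXn hadapted hreal hconv =>
    obtain ⟨V, v1, v2, v3⟩ := hconv
    obtain ⟨ω⟩ := ‹Nonempty Ω›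
    have h1 := v2 ω
    rw [C_zero hd v1] at h1
    exact absurd h1 (by simp)

lemma upperExp_zero [Nonempty Ω] (hd : M.d = 0) : upperExp M (fun _ _ => 0) = 0 := by
  refine le_antisymm (sInf_le ⟨_, .simple (fun _ _ => 0) ⟨fun j => (by rw [hd] at j; exact j.elim0), ?_⟩
    (fun _ _ => le_rfl), fun _ => by simp, fun _ _ => by simp⟩) (upperExp_nonneg _)
  intro t ω
  have : IsEmpty (Fin M.d) := by rw [hd]; infer_instance
  simp

lemma main_zero [Nonempty Ω] (hd : M.d = 0) (hX : IsMartingale M X) (T : ProperSeq M) (hp : 1 ≤ p) :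
    upperExp M (PhiM X T p) = 0 ∧ upperExp M (PhiQ X T p) = 0 := by
  have h0 := mart_zero hd hX
  have h1 : PhiM X T p = fun _ _ => 0 := by
    ext t ω
    simp [PhiM, supAlong, stopVal, h0, ENNReal.zero_rpow_of_pos (by linarith : 0 < p)]
  have h2 : PhiQ X T p = fun _ _ => 0 := by
    ext t ω
    simp [PhiQ, sqVarAlong, stopVal, h0, ENNReal.zero_rpow_of_pos (by linarith : 0 < p / 2)]
  rw [h1, h2]
  exact ⟨upperExp_zero hd, upperExp_zero hd⟩

lemma upperExp_empty [IsEmpty Ω] {Φ : ℝ≥0 → Ω → EReal} {Z : ℝ≥0 → Ω → EReal}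
    (hZ : IsNonnegSupermart M Z) : upperExp M Φ = ⊥ :=
  le_bot_iff.1 (sInf_le ⟨Z, hZ, fun ω => isEmptyElim ω, fun _ ω => isEmptyElim ω⟩)

/-- constant selection -/
lemma final_aux {q m : EReal} (hp : 1 ≤ p) (h : (0 ≤ q ∧ 0 ≤ m ∧ m ≤ ((3 * p) ^ p : ℝ) * q ∧
    q ≤ ((3 * p) ^ p : ℝ) * m) ∨ (q = ⊥ ∧ m = ⊥)) :
    ∃ c C : ℝ, 0 < c ∧ 0 < C ∧ ((c : EReal) * q ≤ m) ∧ (m ≤ (C : EReal) * q) ∧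
      (1 < p → C = 6 ^ p * (p - 1) ^ (p - 1) ∧ c = 1 / C) ∧
      (p = 1 → C = 6 ∧ c = 1 / 3) := by
  have main : ∀ c C : ℝ, 0 < c → (3 * p) ^ p ≤ C → (3 * p) ^ p ≤ 1 / c →
      ((c : EReal) * q ≤ m) ∧ (m ≤ (C : EReal) * q) := by
    intro c C hc h1 h2
    have hC : 0 < C := lt_of_lt_of_le (by positivity) h1
    rcases h with ⟨hq, hm, h3, h4⟩ | ⟨rfl, rfl⟩
    · constructor
      · have h5 : q ≤ ((1 / c : ℝ) : EReal) * m :=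
          h4.trans (mul_le_mul_of_nonneg_right (EReal.coe_le_coe_iff.2 h2) hm)
        have h6 := mul_le_mul_of_nonneg_left h5 (EReal.coe_nonneg.2 hc.le)
        rwa [← mul_assoc, ← EReal.coe_mul, mul_one_div_cancel hc.ne', EReal.coe_one, one_mul] at h6
      · exact h3.trans (mul_le_mul_of_nonneg_right (EReal.coe_le_coe_iff.2 h1) hq)
    · rw [EReal.coe_mul_bot_of_pos hc]
      exact ⟨le_rfl, bot_le⟩
  rcases hp.lt_or_eq with hp1 | rfl
  · have hC : (0 : ℝ) < 6 ^ p * (p - 1) ^ (p - 1) := by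
      have : 0 < p - 1 := by linarith
      positivity
    obtain ⟨a, b⟩ := main (1 / (6 ^ p * (p - 1) ^ (p - 1))) (6 ^ p * (p - 1) ^ (p - 1)) (by positivity)
      (const_ineq hp1) (by rw [one_div_one_div]; exact const_ineq hp1)
    exact ⟨_, _, by positivity, hC, a, b, fun _ => ⟨rfl, rfl⟩, fun h => absurd h hp1.ne'⟩
  · obtain ⟨a, b⟩ := main (1 / 3) 6 (by norm_num) (by norm_num) (by norm_num)
    exact ⟨_, _, by norm_num, by norm_num, a, b, fun h => absurd h (lt_irrefl _), fun _ => ⟨rfl, rfl⟩⟩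
end main

lemma C_ex (M : MartingaleSpace Ω) : ∃ Z, IsNonnegSupermart M Z := by
  rcases Nat.eq_zero_or_pos M.d with hd | hd
  · have : IsEmpty (Fin M.d) := by rw [hd]; infer_instance
    exact ⟨_, .simple (fun _ _ => 0) ⟨fun j => isEmptyElim j, fun t ω => by simp⟩ fun _ _ => le_rfl⟩
  · exact ⟨_, C_const hd le_rfl⟩

end helpers

/-- BDG inequalities for the simple quadratic variation, with the explicit
constants `C_p = 6^p (p−1)^{p−1}`, `c_p = 1/C_p` for `p > 1`, and `C_1 = 6`, `c_1 = 1/3`. -/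
theorem bdg_simple (M : MartingaleSpace Ω) (hA : AssumptionA M)
    (X : ℝ≥0 → Ω → EReal) (hX : IsMartingale M X) (τ : ProperSeq M)
    (p : ℝ) (hp : 1 ≤ p) :
    ∃ c C : ℝ, 0 < c ∧ 0 < C ∧
      ((c : EReal) *
          upperExp M (fun t ω => ((sqVarAlong X τ.τ t ω ^ (p / 2) : ℝ≥0∞) : EReal)) ≤
        upperExp M (fun t ω =>
          ((supAlong (fun s ω' => X s ω' - X 0 ω') τ.τ t ω ^ p : ℝ≥0∞) : EReal))) ∧
      (upperExp M (fun t ω =>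
          ((supAlong (fun s ω' => X s ω' - X 0 ω') τ.τ t ω ^ p : ℝ≥0∞) : EReal)) ≤
        (C : EReal) *
          upperExp M (fun t ω => ((sqVarAlong X τ.τ t ω ^ (p / 2) : ℝ≥0∞) : EReal))) ∧
      (1 < p → C = 6 ^ p * (p - 1) ^ (p - 1) ∧ c = 1 / C) ∧
      (p = 1 → C = 6 ∧ c = 1 / 3) := by
  refine final_aux (q := upperExp M (PhiQ X τ p)) (m := upperExp M (PhiM X τ p)) hp ?_
  rcases isEmpty_or_nonempty Ω with hΩ | hΩ
  · obtain ⟨Z, hZ⟩ := C_ex M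
    exact Or.inr ⟨upperExp_empty hZ, upperExp_empty hZ⟩
  · left
    refine ⟨upperExp_nonneg _, upperExp_nonneg _, ?_⟩
    rcases Nat.eq_zero_or_pos M.d with hd | hd
    · obtain ⟨h1, h2⟩ := main_zero hd hX τ hp
      rw [h1, h2]; simp
    · exact ⟨main_b hd hA hX τ hp, main_a hd hA hX τ hp⟩

end ModelFreeBDG
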